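/- arXiv:1309.5828 — 3 statements merged into one kernel-verified Lean document; each statement's English description precedes it below -/
import Mathlib

section
/- For all real x > 0, α > 0, and β > 0 with β not an integer, ∫₀^{π/2} sin^{α−1}(v) · cos^{β−1}(v) · cos(x·tan v + (α+β)v) dv = cos(απ/2)·(Γ(α)·Γ(β)/Γ(α+β))·φ(α, 1−β, x) + cos(απ/2)·Γ(−β)·x^β·φ(α+β, 1+β, x). -/
/-!
With `t = tan v` the integral becomes the real part of `∫₀^∞ t^(α-1) e^(ixt) (1-it)^(-s) dt`, where
`s = α + β`. Writing `(1-it)^(-s)` as a Gamma integral in a new variable `y`, exchanging the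
integrals (after inserting `e^(-δt)` and letting `δ → 0+`) and evaluating the `t`-integral gives

  `cos (απ/2) · (Γ(α) / Γ(s)) · ∫₀^∞ y^(s-1) e^(-y) (x+y)^(-α) dy`

(`laplace_rpow`, `osc_fubini`, `osc_eq`, `sine_cosine_eq`). The last integral, `trK α s x`, is
`Γ(s) U(α, 1-β, x)` for Tricomi's function `U`, so what remains is the connection formula expressing
`U` through the two Kummer series, `trK_eq_kR`.

For `0 < β < 1` that formula is a uniqueness statement. Both sides satisfy Kummer's differential
equation, written as a first-order system for the function and its flux `x^(1-β) e^(-x) f'(x)`. The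
coefficients of this system are integrable at the singular point `0`, so an energy estimate shows
that a solution is determined by the limits of function and flux at `0` (`system_unique`). For the
Kummer series these limits are immediate. For the flux of `trK` the limit comes from Kummer's transformation of `U`
(`trK_swap`), which is Fubini applied to a double integral symmetric in the two parameters.

For larger `β`, differentiation in `x` shifts `(α, β)` to `(α+1, β-1)` on both sides, so induction on
the integer part of `β` makes the derivatives agree, and the values at `0+` agree as well.
-/

open MeasureTheory intervalIntegral
open scoped Nat

/-- Kummer's confluent hypergeometric series φ(α,β,x) = ∑ (α)ₙ/(β)ₙ · xⁿ/n!. -/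
noncomputable def kummerPhi (α β x : ℝ) : ℝ :=
  ∑' n : ℕ, ((ascPochhammer ℝ n).eval α / (ascPochhammer ℝ n).eval β) * x ^ n / (n ! : ℝ)

open Set Filter Topology

/-! ### Contiguity and derivatives of the Kummer series -/

lemma poch_left (a : ℝ) (n : ℕ) :
    a * (ascPochhammer ℝ n).eval (a + 1) = (ascPochhammer ℝ n).eval a * (a + n) := by
  rw [← ascPochhammer_succ_eval, ascPochhammer_succ_left]
  simp [Polynomial.eval_comp]

lemma poch_ne {b : ℝ} (hb : ∀ n : ℕ, b + n ≠ 0) (n : ℕ) :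
    (ascPochhammer ℝ n).eval b ≠ 0 := by
  induction n with
  | zero => simp
  | succ n ih => rw [ascPochhammer_succ_eval]; exact mul_ne_zero ih (hb n)

/-- The coefficient of `xⁿ` in `kummerPhi a b x`. -/
noncomputable def kCoeff (a b : ℝ) (n : ℕ) : ℝ :=
  (ascPochhammer ℝ n).eval a / (ascPochhammer ℝ n).eval b / (n ! : ℝ)

lemma kummerPhi_eq (a b x : ℝ) : kummerPhi a b x = ∑' n : ℕ, kCoeff a b n * x ^ n := by
  unfold kummerPhi kCoeff
  congr 1; ext n; ring

lemma ne_succ {b : ℝ} (hb : ∀ n : ℕ, b + n ≠ 0) (n : ℕ) : b + 1 + n ≠ 0 := by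
  have := hb (n + 1); push_cast at this; intro h; apply this; linarith

lemma kCoeff_succ {b : ℝ} (a : ℝ) (hb : ∀ n : ℕ, b + n ≠ 0) (n : ℕ) :
    ((n + 1 : ℕ) : ℝ) * kCoeff a b (n + 1) = a / b * kCoeff (a + 1) (b + 1) n := by
  have h1 := poch_left a n
  have h2 := poch_left b n
  have h3 := poch_ne hb n
  have h4 := poch_ne (ne_succ hb) n
  have h5 := hb n
  have h6 : b ≠ 0 := by simpa using hb 0
  have h7 : (n ! : ℝ) ≠ 0 := by positivity
  have h8 : ((n : ℝ) + 1) ≠ 0 := by positivity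
  unfold kCoeff
  rw [ascPochhammer_succ_eval, ascPochhammer_succ_eval, Nat.factorial_succ, ← h1, ← h2]
  push_cast
  field_simp

lemma kCoeff_summable {a b : ℝ} (ha : 0 < a) (hb : ∀ n : ℕ, b + n ≠ 0) (x : ℝ) :
    Summable fun n => |kCoeff a b n * x ^ n| := by
  rcases eq_or_ne x 0 with rfl | hx
  · apply summable_of_ne_finset_zero (s := {0})
    intro n hn
    simp at hn
    simp [hn]
  -- The ratio of consecutive terms tends to `0`.
  have key : Tendsto (fun n : ℕ => (a + n) / (b + n) * (|x| / (n + 1))) atTop (𝓝 (1 * 0)) := by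
    apply Tendsto.mul
    · have h1 : Tendsto (fun n : ℕ => (1 + a / n) / (1 + b / n : ℝ)) atTop
          (𝓝 ((1 + 0) / (1 + 0))) := by
        apply Tendsto.div
        · exact (tendsto_const_div_atTop_nhds_zero_nat a).const_add 1
        · exact (tendsto_const_div_atTop_nhds_zero_nat b).const_add 1
        · norm_num
      rw [show ((1 : ℝ) + 0) / (1 + 0) = 1 by norm_num] at h1
      refine h1.congr' ?_
      filter_upwards [eventually_gt_atTop 0] with n hn
      have hn' : (n : ℝ) ≠ 0 := by positivity
      rw [← mul_div_mul_right _ _ hn']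
      congr 1 <;> field_simp <;> ring
    · exact (tendsto_const_div_atTop_nhds_zero_nat |x|).comp (tendsto_add_atTop_nat 1)
        |>.congr (fun n => by simp)
  rw [mul_zero] at key
  have key2 := key.abs
  rw [abs_zero] at key2
  have hne : ∀ n, kCoeff a b n * x ^ n ≠ 0 := by
    intro n
    have h1 : (ascPochhammer ℝ n).eval a ≠ 0 := poch_ne (fun m => by positivity) n
    have h2 := poch_ne hb n
    have h3 : (n ! : ℝ) ≠ 0 := by positivity
    unfold kCoeff
    positivity
  have := summable_of_ratio_test_tendsto_lt_one (f := fun n => kCoeff a b n * x ^ n)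
    (l := 0) (by norm_num) (Eventually.of_forall hne) ?_
  · exact this.abs
  refine key2.congr fun n => ?_
  rw [← norm_div, Real.norm_eq_abs]
  have h1 : (ascPochhammer ℝ n).eval a ≠ 0 := poch_ne (fun m => by positivity) n
  have h2 := poch_ne hb n
  have h3 : (n ! : ℝ) ≠ 0 := by positivity
  have h4 := hb n
  have h8 : ((n : ℝ) + 1) ≠ 0 := by positivity
  have : kCoeff a b (n + 1) * x ^ (n + 1) / (kCoeff a b n * x ^ n)
      = (a + n) / (b + n) * (x / (n + 1)) := by
    unfold kCoeff
    rw [ascPochhammer_succ_eval, ascPochhammer_succ_eval, Nat.factorial_succ, pow_succ]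
    push_cast
    field_simp
  rw [this, abs_mul, abs_mul, abs_div |x|, abs_div x, abs_abs]

lemma kummer_hasSum {a b : ℝ} (ha : 0 < a) (hb : ∀ n : ℕ, b + n ≠ 0) (x : ℝ) :
    HasSum (fun n => kCoeff a b n * x ^ n) (kummerPhi a b x) := by
  rw [kummerPhi_eq]
  exact (kCoeff_summable ha hb x).of_abs.hasSum

/-- The Euler operator `x d/dx` applied termwise to the series of `kummerPhi a b`. -/
lemma kummer_euler {a b : ℝ} (ha : 0 < a) (hb : ∀ n : ℕ, b + n ≠ 0) (x : ℝ) :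
    HasSum (fun n : ℕ => (n : ℝ) * kCoeff a b n * x ^ n)
      (x * (a / b * kummerPhi (a + 1) (b + 1) x)) := by
  rw [← hasSum_nat_add_iff' 1]
  have := ((kummer_hasSum (a := a + 1) (b := b + 1) (by linarith) (ne_succ hb) x).mul_left
    (a / b)).mul_left x
  simp only [Finset.range_one, Finset.sum_singleton, Nat.cast_zero, zero_mul, sub_zero]
  refine (this.congr_fun fun n => ?_)
  rw [kCoeff_succ a hb n]
  ring

lemma kummer_hasDerivAt {a b : ℝ} (ha : 0 < a) (hb : ∀ n : ℕ, b + n ≠ 0) (x : ℝ) :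
    HasDerivAt (kummerPhi a b) (a / b * kummerPhi (a + 1) (b + 1) x) x := by
  have hfun : kummerPhi a b = fun x => ∑' n : ℕ, kCoeff a b n * x ^ n := by
    ext x; exact kummerPhi_eq a b x
  set R := |x| + 1 with hR
  have hsum : Summable fun n : ℕ => |kCoeff a b n * ((n : ℝ) * R ^ (n - 1))| := by
    rw [← summable_nat_add_iff 1]
    refine ((kCoeff_summable (a := a + 1) (by linarith) (ne_succ hb) R).mul_left |a / b|).congr ?_
    intro n
    rw [← abs_mul]
    congr 1
    have := kCoeff_succ a hb n
    simp only [Nat.add_sub_cancel]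
    rw [← mul_assoc, ← this]; ring
  have hd := hasDerivAt_tsum_of_isPreconnected (t := Ioo (-R) R)
    (g := fun (n : ℕ) (y : ℝ) => kCoeff a b n * y ^ n)
    (g' := fun (n : ℕ) (y : ℝ) => kCoeff a b n * ((n : ℝ) * y ^ (n - 1)))
    (y₀ := 0) (y := x) hsum isOpen_Ioo isPreconnected_Ioo
    (fun n y hy => (hasDerivAt_pow n y).const_mul _)
    (fun n y hy => by
      rw [Real.norm_eq_abs, abs_mul, abs_mul, abs_mul, abs_mul, abs_pow, abs_pow]
      have hy' : |y| ≤ |R| := by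
        rw [abs_of_pos (show 0 < R by positivity)]
        exact (abs_lt.2 hy).le
      gcongr)
    (by
      have : 0 < R := by positivity
      constructor <;> linarith)
    (kCoeff_summable ha hb 0).of_abs
    (abs_lt.1 (by linarith))
  rw [hfun]
  refine hd.congr_deriv ?_
  rw [tsum_eq_zero_add' ?_]
  · simp only [Nat.cast_zero, zero_mul, mul_zero, zero_add, Nat.add_sub_cancel]
    rw [kummerPhi_eq, ← tsum_mul_left]
    congr 1; ext n
    linear_combination x ^ n * kCoeff_succ a hb n
  · simp only [Nat.add_sub_cancel]
    refine ((kCoeff_summable (a := a + 1) (by linarith) (ne_succ hb) x).of_abs.mul_left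
      (a / b)).congr fun n => ?_
    rw [← mul_assoc, ← kCoeff_succ a hb n]; ring

lemma kummer_zero (a b : ℝ) : kummerPhi a b 0 = 1 := by
  unfold kummerPhi
  rw [tsum_eq_single 0]
  · simp
  · intro n hn; simp [hn]

/-- Contiguous relation: `x d/dx + a` raises the parameter `a`. -/
lemma kummer_contig_a {a b : ℝ} (ha : 0 < a) (hb : ∀ n : ℕ, b + n ≠ 0) (x : ℝ) :
    a * kummerPhi (a + 1) b x
      = a * kummerPhi a b x + x * (a / b * kummerPhi (a + 1) (b + 1) x) := by
  refine ((kummer_hasSum (a := a + 1) (by linarith) hb x).mul_left a).unique ?_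
  convert ((kummer_hasSum ha hb x).mul_left a).add (kummer_euler ha hb x) using 2 with n
  have h1 := poch_left a n
  unfold kCoeff
  linear_combination h1 / (ascPochhammer ℝ n).eval b / (n ! : ℝ) * x ^ n

/-- Contiguous relation: `x d/dx + b` lowers the parameter `b + 1`. -/
lemma kummer_contig_b {a b : ℝ} (ha : 0 < a) (hb : ∀ n : ℕ, b + n ≠ 0) (x : ℝ) :
    b * kummerPhi a b x
      = b * kummerPhi a (b + 1) x + x * (a / (b + 1) * kummerPhi (a + 1) (b + 1 + 1) x) := by
  refine ((kummer_hasSum ha hb x).mul_left b).unique ?_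
  convert ((kummer_hasSum ha (ne_succ hb) x).mul_left b).add
    (kummer_euler ha (ne_succ hb) x) using 2 with n
  have h1 := poch_left b n
  have h2 := poch_ne hb n
  have h3 := poch_ne (ne_succ hb) n
  have h4 : (n ! : ℝ) ≠ 0 := by positivity
  unfold kCoeff
  field_simp
  linear_combination (ascPochhammer ℝ n).eval a * x ^ n * h1

/-- Contiguous relation between the parameters `(a + 1, b + 1)`, `(a, b)` and `(a, b + 1)`. -/
lemma kummer_contig_ab {a b : ℝ} (ha : 0 < a) (hb : ∀ n : ℕ, b + n ≠ 0) (x : ℝ) :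
    a * kummerPhi (a + 1) (b + 1) x - b * kummerPhi a b x
      = (a - b) * kummerPhi a (b + 1) x := by
  refine (((kummer_hasSum (a := a + 1) (by linarith) (ne_succ hb) x).mul_left a).sub
    ((kummer_hasSum ha hb x).mul_left b)).unique ?_
  refine ((kummer_hasSum ha (ne_succ hb) x).mul_left (a - b)).congr_fun fun n => ?_
  have h0 := poch_left a n
  have h1 := poch_left b n
  have h2 := poch_ne hb n
  have h3 := poch_ne (ne_succ hb) n
  have h4 : (n ! : ℝ) ≠ 0 := by positivity
  unfold kCoeff
  field_simp
  linear_combination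
    x ^ n * ((ascPochhammer ℝ n).eval b * h0 - (ascPochhammer ℝ n).eval a * h1)

/-- The second solution of Kummer's equation differentiates to one of the same kind, so the
exponent `b` drops by one. -/
lemma kummer_rpow_hasDerivAt {a b : ℝ} (ha : 0 < a) (hb : ∀ n : ℕ, b + n ≠ 0) {x : ℝ}
    (hx : 0 < x) :
    HasDerivAt (fun x => x ^ b * kummerPhi a (b + 1) x) (b * x ^ (b - 1) * kummerPhi a b x) x := by
  have h := (Real.hasDerivAt_rpow_const (p := b) (Or.inl hx.ne')).mul
    (kummer_hasDerivAt ha (ne_succ hb) x)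
  refine h.congr_deriv ?_
  have hc := kummer_contig_b ha hb x
  have hp : x ^ b = x ^ (b - 1) * x := by
    rw [← Real.rpow_add_one hx.ne']; ring_nf
  rw [hp]
  linear_combination -(x ^ (b - 1)) * hc

/-! ### Tricomi's function as an integral -/

/-- The integral `∫₀^∞ y^(s-1) e^(-y) (x+y)^(-a) dy`; it equals `Γ(s) U(a, a-s+1, x)` for Tricomi's
confluent hypergeometric function `U`. -/
noncomputable def trK (a s x : ℝ) : ℝ :=
  ∫ y in Ioi (0 : ℝ), y ^ (s - 1) * Real.exp (-y) * (x + y) ^ (-a)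

lemma gamma_int {s : ℝ} (hs : 0 < s) :
    IntegrableOn (fun y : ℝ => y ^ (s - 1) * Real.exp (-y)) (Ioi 0) :=
  (Real.GammaIntegral_convergent hs).congr_fun (fun _ _ => mul_comm _ _) measurableSet_Ioi

lemma trK_integrable {a s x : ℝ} (ha : 0 < a) (hs : 0 < s) (hx : 0 < x) :
    IntegrableOn (fun y : ℝ => y ^ (s - 1) * Real.exp (-y) * (x + y) ^ (-a)) (Ioi 0) := by
  refine ((gamma_int hs).mul_const (x ^ (-a))).mono' (by fun_prop) ?_
  filter_upwards [ae_restrict_mem measurableSet_Ioi] with y hy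
  have hy : 0 < y := hy
  rw [Real.norm_of_nonneg (by positivity)]
  exact mul_le_mul_of_nonneg_left
    (Real.rpow_le_rpow_of_nonpos hx (by linarith) (by linarith)) (by positivity)

/-- The right-hand side is symmetric under exchange of `a` and `s`, up to the order of
integration. -/
lemma trK_double {a s x : ℝ} (ha : 0 < a) (hx : 0 < x) :
    x ^ a * Real.Gamma a * trK a s x = ∫ y in Ioi (0 : ℝ), ∫ w in Ioi (0 : ℝ),
      (y ^ (s - 1) * Real.exp (-y)) * (w ^ (a - 1) * Real.exp (-w)) * Real.exp (-(y * w / x)) := by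
  unfold trK
  rw [← MeasureTheory.integral_const_mul]
  refine setIntegral_congr_fun measurableSet_Ioi fun y hy => ?_
  have hy : 0 < y := hy
  have h1 := Real.integral_rpow_mul_exp_neg_mul_Ioi ha (r := 1 + y / x) (by positivity)
  have h2 : ∫ w in Ioi (0 : ℝ), (y ^ (s - 1) * Real.exp (-y)) * (w ^ (a - 1) * Real.exp (-w))
      * Real.exp (-(y * w / x))
      = (y ^ (s - 1) * Real.exp (-y)) *
        ∫ w in Ioi (0 : ℝ), w ^ (a - 1) * Real.exp (-((1 + y / x) * w)) := by
    rw [← MeasureTheory.integral_const_mul]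
    refine setIntegral_congr_fun measurableSet_Ioi fun w hw => ?_
    rw [mul_assoc, mul_assoc (w ^ (a - 1)), ← Real.exp_add]
    congr 4
    ring
  rw [h2, h1]
  have h3 : (1 / (1 + y / x)) ^ a = x ^ a * (x + y) ^ (-a) := by
    rw [Real.rpow_neg (by positivity), ← div_eq_mul_inv, ← Real.div_rpow hx.le (by positivity)]
    congr 1
    field_simp
  rw [h3]; ring

/-- Kummer's transformation of Tricomi's function, in terms of `trK`. -/
lemma trK_swap {a s x : ℝ} (ha : 0 < a) (hs : 0 < s) (hx : 0 < x) :
    x ^ a * Real.Gamma a * trK a s x = x ^ s * Real.Gamma s * trK s a x := by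
  rw [trK_double ha hx, trK_double hs hx, integral_integral_swap]
  · refine setIntegral_congr_fun measurableSet_Ioi fun y hy => ?_
    refine setIntegral_congr_fun measurableSet_Ioi fun w hw => ?_
    rw [mul_comm y w]; ring
  · refine ((gamma_int hs).mul_prod (gamma_int ha)).mono' ?_ ?_
    · refine Measurable.aestronglyMeasurable ?_
      unfold Function.uncurry
      fun_prop
    · rw [Measure.prod_restrict]
      filter_upwards [ae_restrict_mem (measurableSet_Ioi.prod measurableSet_Ioi)] with p hp
      have h1 : 0 < p.1 := hp.1
      have h2 : 0 < p.2 := hp.2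
      simp only [Function.uncurry]
      rw [Real.norm_of_nonneg (by positivity)]
      refine mul_le_of_le_one_right (by positivity) ?_
      rw [Real.exp_le_one_iff, neg_nonpos]
      positivity

lemma trK_hasDerivAt {a s x : ℝ} (ha : 0 < a) (hs : 0 < s) (hx : 0 < x) :
    HasDerivAt (trK a s) (-a * trK (a + 1) s x) x := by
  have h := (hasDerivAt_integral_of_dominated_loc_of_deriv_le
    (μ := volume.restrict (Ioi (0 : ℝ)))
    (F := fun x y : ℝ => y ^ (s - 1) * Real.exp (-y) * (x + y) ^ (-a))
    (F' := fun x y : ℝ => y ^ (s - 1) * Real.exp (-y) * (-a * (x + y) ^ (-a - 1)))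
    (bound := fun y : ℝ => y ^ (s - 1) * Real.exp (-y) * (a * (x / 2) ^ (-a - 1)))
    (s := Ioi (x / 2)) (x₀ := x) (Ioi_mem_nhds (by linarith))
    (Eventually.of_forall fun z => by fun_prop) (trK_integrable ha hs hx) (by fun_prop) ?_
    ((gamma_int hs).mul_const _) ?_).2
  · refine h.congr_deriv ?_
    unfold trK
    rw [← MeasureTheory.integral_const_mul]
    refine setIntegral_congr_fun measurableSet_Ioi fun y hy => ?_
    rw [show -(a + 1) = -a - 1 by ring]; ring
  · filter_upwards [ae_restrict_mem measurableSet_Ioi] with y hy z hz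
    have hy : 0 < y := hy
    have hz : x / 2 < z := hz
    have hz0 : 0 < z := by linarith
    rw [norm_mul, norm_mul (-a), Real.norm_of_nonneg (by positivity : 0 ≤ y ^ (s - 1) * Real.exp (-y)),
      norm_neg, Real.norm_of_nonneg ha.le, Real.norm_of_nonneg (by positivity)]
    gcongr ?_ * (_ * ?_)
    exact Real.rpow_le_rpow_of_nonpos (by linarith) (by linarith) (by linarith)
  · filter_upwards [ae_restrict_mem measurableSet_Ioi] with y hy z hz
    have hy : 0 < y := hy
    have hz : x / 2 < z := hz
    have := (((hasDerivAt_id z).add_const y).rpow_const (p := -a)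
      (Or.inl (by simp only [id]; linarith))).const_mul (y ^ (s - 1) * Real.exp (-y))
    refine this.congr_deriv ?_
    simp

/-- The value at `0` of `trK a s`, in the range where the integral at `x = 0` converges. -/
lemma trK_tendsto {a s : ℝ} (ha : 0 < a) (hs : a < s) :
    Tendsto (trK a s) (𝓝[>] 0) (𝓝 (Real.Gamma (s - a))) := by
  have hlim : Real.Gamma (s - a) = ∫ y in Ioi (0 : ℝ), y ^ (s - 1) * Real.exp (-y) * y ^ (-a) := by
    rw [Real.Gamma_eq_integral (by linarith)]
    refine setIntegral_congr_fun measurableSet_Ioi fun y hy => ?_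
    rw [show s - a - 1 = (s - 1) + (-a) by ring, Real.rpow_add hy]; ring
  rw [hlim]
  refine tendsto_integral_filter_of_dominated_convergence
    (fun y : ℝ => y ^ (s - a - 1) * Real.exp (-y))
    (Eventually.of_forall fun z => by fun_prop) ?_ (gamma_int (by linarith)) ?_
  · filter_upwards [self_mem_nhdsWithin] with x hx
    filter_upwards [ae_restrict_mem measurableSet_Ioi] with y hy
    have hy : 0 < y := hy
    have hx : 0 < x := hx
    rw [Real.norm_of_nonneg (by positivity),
      show s - a - 1 = (s - 1) + (-a) by ring, Real.rpow_add hy, mul_right_comm _ _ (Real.exp (-y))]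
    refine mul_le_mul_of_nonneg_left ?_ (by positivity)
    exact Real.rpow_le_rpow_of_nonpos hy (by linarith) (by linarith)
  · filter_upwards [ae_restrict_mem measurableSet_Ioi] with y hy
    have hy : 0 < y := hy
    refine Tendsto.const_mul _ (tendsto_nhdsWithin_of_tendsto_nhds ?_)
    have hc : ContinuousAt (fun x : ℝ => (x + y) ^ (-a)) 0 :=
      ContinuousAt.rpow_const (by fun_prop) (Or.inl (by simpa using hy.ne'))
    simpa [ContinuousAt] using hc

/-- Integration by parts, from `d/dy (y^q e^(-y) (x+y)^(-p))`. -/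
lemma trK_ibp {p q x : ℝ} (hp : 0 < p) (hq : 0 < q) (hx : 0 < x) :
    q * trK p q x = trK p (q + 1) x + p * trK (p + 1) (q + 1) x := by
  have i1 := (trK_integrable hp hq hx).const_mul q
  have i2 := trK_integrable hp (add_pos hq one_pos) hx
  have i3 := (trK_integrable (add_pos hp one_pos) (add_pos hq one_pos) hx).const_mul p
  have h := integral_Ioi_of_hasDerivAt_of_tendsto (a := 0) (m := 0)
    (f := fun y : ℝ => y ^ q * Real.exp (-y) * (x + y) ^ (-p))
    (f' := fun y : ℝ => q * (y ^ (q - 1) * Real.exp (-y) * (x + y) ^ (-p))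
      - y ^ (q + 1 - 1) * Real.exp (-y) * (x + y) ^ (-p)
      - p * (y ^ (q + 1 - 1) * Real.exp (-y) * (x + y) ^ (-(p + 1)))) ?_ ?_
      ((i1.sub i2).sub i3) ?_
  · have e1 := MeasureTheory.integral_sub (i1.sub i2) i3
    simp only [Pi.sub_apply] at e1
    rw [e1, MeasureTheory.integral_sub i1 i2, MeasureTheory.integral_const_mul,
      MeasureTheory.integral_const_mul] at h
    simp only [Real.zero_rpow hq.ne', zero_mul, sub_zero] at h
    unfold trK
    linarith
  · refine ContinuousAt.continuousWithinAt ?_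
    refine ContinuousAt.mul (ContinuousAt.mul ?_ (by fun_prop)) ?_
    · exact Real.continuousAt_rpow_const _ _ (Or.inr hq.le)
    · exact ContinuousAt.rpow_const (by fun_prop) (Or.inl (by simpa using hx.ne'))
  · intro y hy
    have hy : 0 < y := hy
    have h1 := ((Real.hasDerivAt_rpow_const (p := q) (Or.inl hy.ne')).mul
      (hasDerivAt_neg y).exp).mul (((hasDerivAt_id y).const_add x).rpow_const (p := -p)
      (Or.inl (by simp only [id]; linarith)))
    refine h1.congr_deriv ?_
    simp only [id, add_sub_cancel_right, neg_add, ← sub_eq_add_neg, Pi.mul_apply]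
    ring
  · have h1 : Tendsto (fun y : ℝ => y ^ q * Real.exp (-y)) atTop (𝓝 0) := by
      simpa using tendsto_rpow_mul_exp_neg_mul_atTop_nhds_zero q 1 one_pos
    have h2 : Tendsto (fun y : ℝ => (x + y) ^ (-p)) atTop (𝓝 0) :=
      (tendsto_rpow_neg_atTop hp).comp (tendsto_atTop_add_const_left _ x tendsto_id)
    simpa using h1.mul h2

/-! ### The differential equation of the right-hand side -/

/-- The claimed value of the integral, without the factor `cos (α π / 2)`. -/
noncomputable def kR (α β x : ℝ) : ℝ :=
  Real.Gamma α * Real.Gamma β / Real.Gamma (α + β) * kummerPhi α (1 - β) x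
    + Real.Gamma (-β) * x ^ β * kummerPhi (α + β) (1 + β) x

lemma nonint_one_sub {β : ℝ} (h : ∀ k : ℤ, β ≠ k) (n : ℕ) : 1 - β + n ≠ 0 := by
  intro h0
  apply h (1 + n)
  push_cast
  linarith

lemma nonint_nat {β : ℝ} (h : ∀ k : ℤ, β ≠ k) (n : ℕ) : β + n ≠ 0 := by
  intro h0
  apply h (-n)
  push_cast
  linarith

lemma nonint_sub_one {β : ℝ} (h : ∀ k : ℤ, β ≠ k) (k : ℤ) : β - 1 ≠ k := by
  intro h0
  apply h (k + 1)
  push_cast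
  linarith

lemma gamma_sub_one {β : ℝ} (h : ∀ k : ℤ, β ≠ k) :
    Real.Gamma β = (β - 1) * Real.Gamma (β - 1) := by
  have h1 : β - 1 ≠ 0 := by simpa using nonint_sub_one h 0
  rw [← Real.Gamma_add_one h1, sub_add_cancel]

lemma gamma_one_sub {β : ℝ} (h : ∀ k : ℤ, β ≠ k) :
    Real.Gamma (1 - β) = -β * Real.Gamma (-β) := by
  have h1 : -β ≠ 0 := by simpa using h 0
  rw [← Real.Gamma_add_one h1]
  congr 1; ring

/-- Differentiation shifts `(α, β)` to `(α + 1, β - 1)`, keeping `α + β`. -/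
lemma kR_hasDerivAt {α β x : ℝ} (hα : 0 < α) (hs : 0 < α + β) (h : ∀ k : ℤ, β ≠ k) (hx : 0 < x) :
    HasDerivAt (kR α β) (-kR (α + 1) (β - 1) x) x := by
  have d1 := (kummer_hasDerivAt hα (nonint_one_sub h) x).const_mul
    (Real.Gamma α * Real.Gamma β / Real.Gamma (α + β))
  have d2 := (kummer_rpow_hasDerivAt hs (nonint_nat h) hx).const_mul (Real.Gamma (-β))
  have d3 := d1.add d2
  have hf : kR α β = (fun y => Real.Gamma α * Real.Gamma β / Real.Gamma (α + β) *
      kummerPhi α (1 - β) y) + (fun y => Real.Gamma (-β) *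
      (y ^ β * kummerPhi (α + β) (β + 1) y)) := by
    ext y
    simp only [kR, Pi.add_apply, add_comm 1 β]
    ring
  rw [hf]
  refine d3.congr_deriv ?_
  have h1 : β - 1 ≠ 0 := by simpa using nonint_sub_one h 0
  have h2 : 1 - β ≠ 0 := by intro h; apply h1; linarith
  have h3 := (Real.Gamma_pos_of_pos hs).ne'
  unfold kR
  rw [show α + 1 + (β - 1) = α + β by ring, show 1 - (β - 1) = 1 - β + 1 by ring,
    show 1 + (β - 1) = β by ring, show -(β - 1) = 1 - β by ring, gamma_sub_one h,
    gamma_one_sub h, Real.Gamma_add_one hα.ne']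
  field_simp
  ring

/-- `kR α β` satisfies Kummer's differential equation, here in self-adjoint form with the
derivative of `kR α β` replaced by `-kR (α + 1) (β - 1)`. -/
lemma kR_flux_hasDerivAt {α β x : ℝ} (hα : 0 < α) (hs : 0 < α + β) (h : ∀ k : ℤ, β ≠ k)
    (hx : 0 < x) :
    HasDerivAt (fun x => Real.exp (-x) * (x ^ (1 - β) * kR (α + 1) (β - 1) x))
      (-(α * x ^ (-β) * Real.exp (-x) * kR α β x)) x := by
  have h1 : β - 1 ≠ 0 := by simpa using nonint_sub_one h 0
  have h2 : 1 - β ≠ 0 := by intro h; apply h1; linarith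
  have h3 := (Real.Gamma_pos_of_pos hs).ne'
  have h4 : β ≠ 0 := by simpa using h 0
  have d1 := (kummer_rpow_hasDerivAt (a := α + 1) (by linarith) (nonint_one_sub h) hx).const_mul
    (Real.Gamma (α + 1) * Real.Gamma (β - 1) / Real.Gamma (α + β))
  have d2 := (kummer_hasDerivAt hs (nonint_nat h) x).const_mul (Real.Gamma (1 - β))
  have d3 := (hasDerivAt_neg x).exp.mul (d1.add d2)
  have key := d3.congr_deriv (g' := -(α * x ^ (-β) * Real.exp (-x) * kR α β x)) ?_
  · refine key.congr_of_eventuallyEq ?_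
    filter_upwards [Ioi_mem_nhds hx] with y hy
    have hy : 0 < y := hy
    have e : y ^ (1 - β) * y ^ (β - 1) = 1 := by
      rw [← Real.rpow_add hy]; simp
    simp only [kR, Pi.mul_apply, Pi.add_apply]
    rw [show α + 1 + (β - 1) = α + β by ring, show 1 - (β - 1) = 1 - β + 1 by ring,
      show 1 + (β - 1) = β by ring, show -(β - 1) = 1 - β by ring]
    linear_combination Real.exp (-y) * Real.Gamma (1 - β) * kummerPhi (α + β) β y * e
  · have c1 := kummer_contig_a hα (nonint_one_sub h) x
    have c2 := kummer_contig_ab hs (nonint_nat h) x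
    have e1 : x ^ (1 - β) = x ^ (-β) * x := by
      rw [← Real.rpow_add_one hx.ne']; ring_nf
    have e2 : x ^ (-β) * x ^ β = 1 := by
      rw [← Real.rpow_add hx]; simp
    simp only [Pi.add_apply, kR]
    rw [show 1 - β - 1 = -β by ring, add_comm 1 β, gamma_sub_one h, gamma_one_sub h,
      Real.Gamma_add_one hα.ne', e1]
    field_simp at c1 ⊢
    linear_combination
      (α * Real.Gamma α * Real.Gamma (β - 1) * x ^ (-β)) * c1
        - Real.Gamma (-β) * Real.Gamma (α + β) * c2
        + α * Real.Gamma (α + β) * Real.Gamma (-β) * kummerPhi (α + β) (β + 1) x * e2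

/-! ### Uniqueness and the connection formula -/

/-- A uniqueness statement for a linear first-order system on `(0, ∞)` whose coefficients are
integrable at `0`: the energy `D² + Q²`, times a suitable integrating factor, is nonincreasing and
tends to `0` at `0`. -/
lemma system_unique {α β : ℝ} (hα : 0 < α) (hβ : 0 < β) (hβ1 : β < 1) {D Q : ℝ → ℝ}
    (hD : ∀ x, 0 < x → HasDerivAt D (-(x ^ (β - 1) * Real.exp x * Q x)) x)
    (hQ : ∀ x, 0 < x → HasDerivAt Q (-(α * x ^ (-β) * Real.exp (-x) * D x)) x)
    (hD0 : Tendsto D (𝓝[>] 0) (𝓝 0)) (hQ0 : Tendsto Q (𝓝[>] 0) (𝓝 0)) {x : ℝ} (hx : 0 < x) :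
    D x = 0 := by
  -- `G` is an antiderivative of a bound on the coefficients on `(0, X)`; it is finite at `0` because
  -- `0 < β < 1`.
  set X := x + 1 with hX
  set G : ℝ → ℝ := fun t => Real.exp X * (t ^ β / β) + α * (t ^ (1 - β) / (1 - β)) with hG
  have h1β : 0 < 1 - β := by linarith
  have dG : ∀ t, 0 < t → HasDerivAt G (Real.exp X * t ^ (β - 1) + α * t ^ (-β)) t := by
    intro t ht
    have d := (((Real.hasDerivAt_rpow_const (p := β) (Or.inl ht.ne')).div_const β).const_mul
      (Real.exp X)).add (((Real.hasDerivAt_rpow_const (p := 1 - β) (Or.inl ht.ne')).div_const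
      (1 - β)).const_mul α)
    refine d.congr_deriv ?_
    rw [show 1 - β - 1 = -β by ring]
    field_simp
  set F : ℝ → ℝ := fun t => (D t ^ 2 + Q t ^ 2) * Real.exp (-G t) with hF
  have dF : ∀ t, 0 < t → HasDerivAt F
      (-((2 * D t * Q t * (t ^ (β - 1) * Real.exp t + α * t ^ (-β) * Real.exp (-t)) +
        (D t ^ 2 + Q t ^ 2) * (Real.exp X * t ^ (β - 1) + α * t ^ (-β))) * Real.exp (-G t))) t := by
    intro t ht
    have d := (((hD t ht).pow 2).add ((hQ t ht).pow 2)).mul (dG t ht).neg.exp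
    refine d.congr_deriv ?_
    simp only [Pi.add_apply, Pi.neg_apply, Pi.pow_apply]
    push_cast
    ring
  have anti : AntitoneOn F (Ioo 0 X) := by
    refine antitoneOn_of_deriv_nonpos (convex_Ioo 0 X)
      (fun t ht => (dF t ht.1).continuousAt.continuousWithinAt)
      (fun t ht => ?_) (fun t ht => ?_)
    · rw [interior_Ioo] at ht
      exact (dF t ht.1).differentiableAt.differentiableWithinAt
    · rw [interior_Ioo] at ht
      rw [(dF t ht.1).deriv, neg_nonpos]
      refine mul_nonneg ?_ (Real.exp_pos _).le
      have ht0 := ht.1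
      have p1 : t ^ (β - 1) * Real.exp t ≤ Real.exp X * t ^ (β - 1) := by
        rw [mul_comm]
        gcongr
        exact ht.2.le
      have p2 : α * t ^ (-β) * Real.exp (-t) ≤ α * t ^ (-β) :=
        mul_le_of_le_one_right (by positivity) (by rw [Real.exp_le_one_iff]; linarith)
      have p3 : 0 ≤ t ^ (β - 1) * Real.exp t + α * t ^ (-β) * Real.exp (-t) := by positivity
      have p4 : 0 ≤ D t ^ 2 + Q t ^ 2 := by positivity
      nlinarith [mul_nonneg p3 (sq_nonneg (D t + Q t)), mul_le_mul_of_nonneg_left (add_le_add p1 p2) p4]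
  have Fle : ∀ᶠ y in 𝓝[>] (0 : ℝ), F x ≤ D y ^ 2 + Q y ^ 2 := by
    filter_upwards [Ioo_mem_nhdsGT hx] with y hy
    have h1 := anti (a := y) (b := x) ⟨hy.1, by linarith [hy.2]⟩ ⟨hx, by linarith⟩ hy.2.le
    refine h1.trans ?_
    refine mul_le_of_le_one_right (by positivity) ?_
    rw [Real.exp_le_one_iff, neg_nonpos]
    have := hy.1
    positivity
  have lim : Tendsto (fun y => D y ^ 2 + Q y ^ 2) (𝓝[>] 0) (𝓝 0) := by
    simpa using (hD0.pow 2).add (hQ0.pow 2)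
  have Fx : F x ≤ 0 := ge_of_tendsto lim Fle
  have hE : D x ^ 2 + Q x ^ 2 ≤ 0 := by
    by_contra hcon
    push Not at hcon
    have : 0 < F x := mul_pos hcon (Real.exp_pos _)
    linarith
  nlinarith [sq_nonneg (D x), sq_nonneg (Q x)]

lemma kummer_tendsto {a b : ℝ} (ha : 0 < a) (hb : ∀ n : ℕ, b + n ≠ 0) :
    Tendsto (kummerPhi a b) (𝓝[>] 0) (𝓝 1) := by
  have := (kummer_hasDerivAt ha hb 0).continuousAt.tendsto
  rw [kummer_zero] at this
  exact tendsto_nhdsWithin_of_tendsto_nhds this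

lemma rpow_tendsto {c : ℝ} (hc : 0 < c) :
    Tendsto (fun x : ℝ => x ^ c) (𝓝[>] 0) (𝓝 0) := by
  have := (Real.continuousAt_rpow_const 0 c (Or.inr hc.le)).tendsto
  rw [Real.zero_rpow hc.ne'] at this
  exact tendsto_nhdsWithin_of_tendsto_nhds this

lemma kR_tendsto {α β : ℝ} (hα : 0 < α) (hβ : 0 < β) (h : ∀ k : ℤ, β ≠ k) :
    Tendsto (kR α β) (𝓝[>] 0) (𝓝 (Real.Gamma α * Real.Gamma β / Real.Gamma (α + β))) := by
  have t1 := (kummer_tendsto hα (nonint_one_sub h)).const_mul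
    (Real.Gamma α * Real.Gamma β / Real.Gamma (α + β))
  have hb : ∀ n : ℕ, 1 + β + n ≠ 0 := fun n => by positivity
  have t2 := ((rpow_tendsto hβ).const_mul (Real.Gamma (-β))).mul
    (kummer_tendsto (a := α + β) (by positivity) hb)
  have t := t1.add t2
  simp only [mul_one, mul_zero, add_zero] at t
  exact t

/-- Limit at `0` of the flux in `kR_flux_hasDerivAt`: only the singular term `x ^ β` of `kR`
contributes. -/
lemma kR_flux_tendsto {α β : ℝ} (hα : 0 < α) (hβ : 0 < β) (hβ1 : β < 1) (h : ∀ k : ℤ, β ≠ k) :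
    Tendsto (fun x => Real.exp (-x) * (x ^ (1 - β) * kR (α + 1) (β - 1) x)) (𝓝[>] 0)
      (𝓝 (Real.Gamma (1 - β))) := by
  have t0 : Tendsto (fun x : ℝ => Real.exp (-x)) (𝓝[>] 0) (𝓝 1) := by
    have : Tendsto (fun x : ℝ => Real.exp (-x)) (𝓝 0) (𝓝 (Real.exp (-0))) :=
      Continuous.tendsto (by fun_prop) 0
    simp only [neg_zero, Real.exp_zero] at this
    exact tendsto_nhdsWithin_of_tendsto_nhds this
  have t1 := ((kummer_tendsto (a := α + 1) (by linarith) (ne_succ (nonint_one_sub h))).const_mul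
    (Real.Gamma (α + 1) * Real.Gamma (β - 1) / Real.Gamma (α + β))).mul
    (rpow_tendsto (c := 1 - β) (by linarith))
  have t2 := (kummer_tendsto (a := α + β) (by linarith) (nonint_nat h)).const_mul
    (Real.Gamma (1 - β))
  have t3 := t0.mul (t1.add t2)
  simp only [mul_one, mul_zero, zero_add, one_mul] at t3
  refine t3.congr' ?_
  filter_upwards [self_mem_nhdsWithin] with y hy
  have hy : 0 < y := hy
  have e : y ^ (1 - β) * y ^ (β - 1) = 1 := by
    rw [← Real.rpow_add hy]; simp
  simp only [kR]
  rw [show α + 1 + (β - 1) = α + β by ring, show 1 - (β - 1) = 1 - β + 1 by ring,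
    show 1 + (β - 1) = β by ring, show -(β - 1) = 1 - β by ring]
  linear_combination -(Real.exp (-y) * Real.Gamma (1 - β) * kummerPhi (α + β) β y) * e

lemma trK_diff_hasDerivAt {α s x : ℝ} (hα : 0 < α) (hs : 0 < s) (hx : 0 < x) :
    HasDerivAt (fun x => Real.Gamma α / Real.Gamma s * trK α s x)
      (-(Real.Gamma (α + 1) / Real.Gamma s * trK (α + 1) s x)) x := by
  refine ((trK_hasDerivAt hα hs hx).const_mul _).congr_deriv ?_
  rw [Real.Gamma_add_one hα.ne']
  ring

/-- Expression of `U` through its Kummer transform. -/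
lemma trK_swap' {α β x : ℝ} (hα : 0 < α) (hs : 0 < α + β) (hx : 0 < x) :
    Real.Gamma α / Real.Gamma (α + β) * trK α (α + β) x = x ^ β * trK (α + β) α x := by
  have h3 := (Real.Gamma_pos_of_pos hs).ne'
  have h := trK_swap hα hs hx
  have h4 : x ^ α ≠ 0 := by positivity
  rw [Real.rpow_add hx] at h
  field_simp
  apply mul_left_cancel₀ h4
  linear_combination h

/-- Up to sign and the factor `e^(-x)`, the flux of `Γ(α) U(α, 1-β, x)` is itself a `trK` integral,
by Kummer's transformation; this gives its limit at `0`. -/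
lemma trK_flux_eq {α β x : ℝ} (hα : 0 < α) (hs : 0 < α + β) (hx : 0 < x) :
    x ^ (1 - β) * (Real.Gamma (α + 1) / Real.Gamma (α + β) * trK (α + 1) (α + β) x)
      = trK (α + β) (α + 1) x := by
  have h := trK_swap' (α := α + 1) (β := β - 1) (by linarith) (by linarith) hx
  rw [show α + 1 + (β - 1) = α + β by ring] at h
  rw [h, ← mul_assoc, ← Real.rpow_add hx]
  simp

/-- The connection formula for `0 < β < 1`: both sides solve Kummer's equation, and the function and
its flux have the same limits at the singular point `0`. -/
lemma trK_eq_kR_base {α β : ℝ} (hα : 0 < α) (hβ : 0 < β) (hβ1 : β < 1) (h : ∀ k : ℤ, β ≠ k)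
    {x : ℝ} (hx : 0 < x) :
    Real.Gamma α / Real.Gamma (α + β) * trK α (α + β) x = kR α β x := by
  have hs : 0 < α + β := by linarith
  suffices H : Real.Gamma α / Real.Gamma (α + β) * trK α (α + β) x - kR α β x = 0 by linarith
  refine system_unique (α := α) (β := β)
    (D := fun x => Real.Gamma α / Real.Gamma (α + β) * trK α (α + β) x - kR α β x)
    (Q := fun x => Real.exp (-x) * trK (α + β) (α + 1) x
      - Real.exp (-x) * (x ^ (1 - β) * kR (α + 1) (β - 1) x)) hα hβ hβ1 ?_ ?_ ?_ ?_ hx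
  · intro x hx
    refine ((trK_diff_hasDerivAt hα hs hx).sub (kR_hasDerivAt hα hs h hx)).congr_deriv ?_
    rw [← trK_flux_eq hα hs hx]
    have e1 : x ^ (1 - β) * x ^ (β - 1) = 1 := by
      rw [← Real.rpow_add hx]; simp
    have e2 : Real.exp x * Real.exp (-x) = 1 := by rw [← Real.exp_add]; simp
    set A := Real.Gamma (α + 1) / Real.Gamma (α + β) * trK (α + 1) (α + β) x
    set B := kR (α + 1) (β - 1) x
    linear_combination (A - B) * (e1 + x ^ (1 - β) * x ^ (β - 1) * (e2))
  · intro x hx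
    have d1 := (hasDerivAt_neg x).exp.mul
      (trK_hasDerivAt (a := α + β) (s := α + 1) hs (by linarith) hx)
    refine (d1.sub (kR_flux_hasDerivAt hα hs h hx)).congr_deriv ?_
    have i := trK_ibp hs hα hx
    have sw := trK_swap' hα hs hx
    have e2 : x ^ (-β) * x ^ β = 1 := by
      rw [← Real.rpow_add hx]; simp
    rw [sw]
    linear_combination Real.exp (-x) * i + α * Real.exp (-x) * trK (α + β) α x * e2
  · have t := ((trK_tendsto hα (show α < α + β by linarith)).const_mul
      (Real.Gamma α / Real.Gamma (α + β))).sub (kR_tendsto hα hβ h)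
    convert t using 2
    rw [add_sub_cancel_left]; ring
  · have t0 : Tendsto (fun x : ℝ => Real.exp (-x)) (𝓝[>] 0) (𝓝 1) := by
      have : Tendsto (fun x : ℝ => Real.exp (-x)) (𝓝 0) (𝓝 (Real.exp (-0))) :=
        Continuous.tendsto (by fun_prop) 0
      simp only [neg_zero, Real.exp_zero] at this
      exact tendsto_nhdsWithin_of_tendsto_nhds this
    have t := (t0.mul (trK_tendsto hs (show α + β < α + 1 by linarith))).sub
      (kR_flux_tendsto hα hβ hβ1 h)
    convert t using 2
    rw [show α + 1 - (α + β) = 1 - β by ring]; ring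

/-- The connection formula expressing `U` through Kummer series. The case `0 < β < 1` is
`trK_eq_kR_base`; differentiation in `x` shifts `(α, β)` to `(α + 1, β - 1)` on both sides, which
gives the induction on the integer part of `β`. -/
lemma trK_eq_kR (N : ℕ) : ∀ {α β : ℝ}, 0 < α → 0 < β → β < N + 1 → (∀ k : ℤ, β ≠ k) →
    ∀ {x : ℝ}, 0 < x → Real.Gamma α / Real.Gamma (α + β) * trK α (α + β) x = kR α β x := by
  induction N with
  | zero =>
    intro α β hα hβ hβ1 h x hx
    exact trK_eq_kR_base hα hβ (by simpa using hβ1) h hx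
  | succ N ih =>
    intro α β hα hβ hβN h x hx
    rcases lt_or_ge β 1 with hβ1 | hβ1
    · exact trK_eq_kR_base hα hβ hβ1 h hx
    have hβ1 : 1 < β := lt_of_le_of_ne hβ1 (by simpa using (h 1).symm)
    have hs : 0 < α + β := by linarith
    set D : ℝ → ℝ := fun x => Real.Gamma α / Real.Gamma (α + β) * trK α (α + β) x - kR α β x
      with hD
    have dD : ∀ y ∈ Ioi (0 : ℝ), HasDerivAt D 0 y := by
      intro y hy
      refine ((trK_diff_hasDerivAt hα hs hy).sub (kR_hasDerivAt hα hs h hy)).congr_deriv ?_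
      have := ih (α := α + 1) (β := β - 1) (by linarith) (by linarith)
        (by push_cast at hβN; linarith) (nonint_sub_one h) hy
      rw [show α + 1 + (β - 1) = α + β by ring] at this
      rw [this]; ring
    have const : ∀ y ∈ Ioi (0 : ℝ), D y = D x := by
      intro y hy
      exact isOpen_Ioi.is_const_of_deriv_eq_zero isPreconnected_Ioi
        (fun z hz => (dD z hz).differentiableAt.differentiableWithinAt)
        (fun z hz => (dD z hz).deriv) hy hx
    have t : Tendsto D (𝓝[>] 0) (𝓝 0) := by
      have t := ((trK_tendsto hα (show α < α + β by linarith)).const_mul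
        (Real.Gamma α / Real.Gamma (α + β))).sub (kR_tendsto hα hβ h)
      convert t using 2
      rw [add_sub_cancel_left]; ring
    have t' : Tendsto D (𝓝[>] 0) (𝓝 (D x)) := by
      refine tendsto_const_nhds.congr' ?_
      filter_upwards [self_mem_nhdsWithin] with y hy
      exact (const y hy).symm
    have : D x = 0 := tendsto_nhds_unique t' t
    simp only [hD] at this
    linarith

/-! ### The oscillatory integral -/

open Complex in
lemma norm_one_sub_inv (t : ℝ) : ‖(1 / (1 - I * t) : ℂ)‖ ≤ 1 := by
  have h : (1 : ℝ) ≤ ‖(1 - I * t : ℂ)‖ := by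
    have := abs_re_le_norm (1 - I * t : ℂ)
    simpa using this
  rw [norm_div, norm_one]
  exact (div_le_one (by linarith)).2 h

open Complex in
lemma norm_one_sub_inv' {t : ℝ} (ht : 0 < t) : ‖(1 / (1 - I * t) : ℂ)‖ ≤ t⁻¹ := by
  have h : t ≤ ‖(1 - I * t : ℂ)‖ := by
    have := abs_im_le_norm (1 - I * t : ℂ)
    simpa [abs_of_pos ht] using this
  rw [norm_div, norm_one, one_div]
  exact inv_anti₀ ht h

open Complex in
/-- The integrable majorant of `osc`, behaving like `t^(α-1)` at `0` and `t^(α-1-s)` at `∞`. -/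
lemma osc_bound_integrable {α s : ℝ} (hα : 0 < α) (hs : α < s) :
    IntegrableOn (fun t : ℝ => t ^ (α - 1) * ‖(1 / (1 - I * t) : ℂ)‖ ^ s) (Ioi 0) := by
  have hm : Measurable (fun t : ℝ => t ^ (α - 1) * ‖(1 / (1 - I * t) : ℂ)‖ ^ s) := by fun_prop
  rw [← Ioc_union_Ioi_eq_Ioi zero_le_one]
  refine IntegrableOn.union ?_ ?_
  · have h1 : IntegrableOn (fun t : ℝ => t ^ (α - 1)) (Ioc 0 1) := by
      rw [← intervalIntegrable_iff_integrableOn_Ioc_of_le zero_le_one]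
      exact intervalIntegral.intervalIntegrable_rpow' (by linarith)
    refine h1.mono' hm.aestronglyMeasurable ?_
    filter_upwards [ae_restrict_mem measurableSet_Ioc] with t ht
    have ht0 : 0 < t := ht.1
    rw [Real.norm_of_nonneg (by positivity)]
    exact mul_le_of_le_one_right (by positivity)
      (Real.rpow_le_one (norm_nonneg _) (norm_one_sub_inv t) (by linarith))
  · have h1 : IntegrableOn (fun t : ℝ => t ^ (α - 1 - s)) (Ioi 1) :=
      integrableOn_Ioi_rpow_of_lt (by linarith) one_pos
    refine h1.mono' hm.aestronglyMeasurable ?_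
    filter_upwards [ae_restrict_mem measurableSet_Ioi] with t ht
    have ht0 : 0 < t := lt_trans one_pos ht
    have e : t ^ (α - 1 - s) = t ^ (α - 1) * t⁻¹ ^ s := by
      rw [Real.rpow_sub ht0, Real.inv_rpow ht0.le, div_eq_mul_inv]
    rw [Real.norm_of_nonneg (by positivity), e]
    exact mul_le_mul_of_nonneg_left (Real.rpow_le_rpow (norm_nonneg _) (norm_one_sub_inv' ht0)
      (by linarith)) (by positivity)

lemma gamma_int_scaled {a c : ℝ} (ha : 0 < a) (hc : 0 < c) :
    IntegrableOn (fun t : ℝ => t ^ (a - 1) * Real.exp (-(c * t))) (Ioi 0) := by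
  have := integrableOn_rpow_mul_exp_neg_mul_rpow (p := 1) (s := a - 1) (by linarith) one_pos hc
  simpa using this

open Complex in
/-- Mathlib has this Laplace transform for real `r > 0`; both sides are holomorphic in `Re r > 0`, so
the identity theorem extends it. -/
lemma laplace_rpow {a : ℝ} (ha : 0 < a) {r : ℂ} (hr : 0 < r.re) :
    ∫ t in Ioi (0 : ℝ), ((t ^ (a - 1) : ℝ) : ℂ) * exp (-(r * t))
      = (1 / r) ^ (a : ℂ) * Complex.Gamma a := by
  set G : ℂ → ℂ := fun r => ∫ t in Ioi (0 : ℝ), ((t ^ (a - 1) : ℝ) : ℂ) * exp (-(r * t)) with hG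
  set U : Set ℂ := {z | 0 < z.re} with hU
  have hUo : IsOpen U := isOpen_lt continuous_const continuous_re
  have hm : ∀ r : ℂ, Measurable (fun t : ℝ => ((t ^ (a - 1) : ℝ) : ℂ) * exp (-(r * t))) := by
    intro r; fun_prop
  have hn : ∀ r : ℂ, ∀ t : ℝ, 0 < t → ‖((t ^ (a - 1) : ℝ) : ℂ) * exp (-(r * t))‖
      = t ^ (a - 1) * Real.exp (-(r.re * t)) := by
    intro r t ht
    rw [norm_mul, norm_real, norm_exp, Real.norm_of_nonneg (by positivity)]
    simp
  have hd : DifferentiableOn ℂ G U := by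
    intro r hr
    have hr : 0 < r.re := hr
    refine DifferentiableAt.differentiableWithinAt ?_
    refine (hasDerivAt_integral_of_dominated_loc_of_deriv_le (𝕜 := ℂ)
      (s := {z : ℂ | r.re / 2 < z.re})
      (F' := fun z (t : ℝ) => ((t ^ (a - 1) : ℝ) : ℂ) * (exp (-(z * t)) * -(1 * t)))
      (bound := fun t => t ^ (a + 1 - 1) * Real.exp (-(r.re / 2 * t)))
      ((isOpen_lt continuous_const continuous_re).mem_nhds (by simp; linarith))
      (Eventually.of_forall fun z => (hm z).aestronglyMeasurable) ?_ ?_ ?_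
      (gamma_int_scaled (by linarith) (by linarith)) ?_).2.differentiableAt
    · refine (gamma_int_scaled ha hr).mono' (hm r).aestronglyMeasurable ?_
      filter_upwards [ae_restrict_mem measurableSet_Ioi] with t ht
      exact (hn r t ht).le
    · exact Measurable.aestronglyMeasurable (by fun_prop)
    · filter_upwards [ae_restrict_mem measurableSet_Ioi] with t ht z hz
      have ht : 0 < t := ht
      have hz : r.re / 2 < z.re := hz
      rw [← mul_assoc, norm_mul, hn z t ht, add_sub_right_comm, Real.rpow_add_one ht.ne']
      have : ‖(-(1 * (t : ℂ)))‖ = t := by simp [abs_of_pos ht]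
      rw [this, mul_right_comm]
      gcongr
    · filter_upwards with t z hz
      exact (((hasDerivAt_id z).mul_const (t : ℂ)).neg.cexp).const_mul _
  have hd2 : DifferentiableOn ℂ (fun r : ℂ => (1 / r) ^ (a : ℂ) * Complex.Gamma a) U := by
    intro r hr
    have hr : 0 < r.re := hr
    have h0 : r ≠ 0 := by rintro rfl; simp at hr
    refine DifferentiableAt.differentiableWithinAt (DifferentiableAt.mul_const ?_ _)
    refine DifferentiableAt.cpow (by fun_prop (disch := assumption)) (by fun_prop) ?_
    left
    rw [one_div, inv_re]
    exact div_pos hr (normSq_pos.2 h0)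
  refine (hd.analyticOnNhd hUo).eqOn_of_preconnected_of_frequently_eq (hd2.analyticOnNhd hUo)
    (convex_halfSpace_re_gt 0).isPreconnected (z₀ := 1) (by simp [hU]) ?_ hr
  have hT : Tendsto (fun u : ℝ => (u : ℂ)) (𝓝[≠] 1) (𝓝[≠] 1) := by
    refine tendsto_nhdsWithin_iff.2 ⟨?_, ?_⟩
    · exact tendsto_nhdsWithin_of_tendsto_nhds (continuous_ofReal.tendsto' 1 1 ofReal_one)
    · filter_upwards [self_mem_nhdsWithin] with u hu
      simpa using hu
  refine hT.frequently (Eventually.frequently ?_)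
  filter_upwards [nhdsWithin_le_nhds (lt_mem_nhds zero_lt_one)] with u hu
  rw [← integral_cpow_mul_exp_neg_mul_Ioi (by simpa using ha) hu]
  refine setIntegral_congr_fun measurableSet_Ioi fun t ht => ?_
  rw [ofReal_cpow (le_of_lt ht)]
  push_cast
  rfl

/-- The complex integrand `t^(α-1) e^(ixt) (1-it)^(-s)` on `(0, ∞)`, regularised by a factor
`e^(-δt)`. For `s = α + β` and `δ = 0` its real part is the original integrand in the variable
`t = tan v` (`osc_re`). The base of the power is written as `1 / (1 - it)`, the form in which the
Laplace transform `laplace_rpow` produces it. -/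
noncomputable def osc (α s x δ t : ℝ) : ℂ :=
  ((t ^ (α - 1) : ℝ) : ℂ) * Complex.exp (-((δ - Complex.I * x) * t))
    * (1 / (1 - Complex.I * t)) ^ (s : ℂ)

open Complex in
lemma osc_meas (α s x δ : ℝ) : Measurable (osc α s x δ) := by
  unfold osc
  fun_prop

open Complex in
lemma osc_norm_le {α s x δ t : ℝ} (hδ : 0 ≤ δ) (ht : 0 < t) :
    ‖osc α s x δ t‖ ≤ t ^ (α - 1) * ‖(1 / (1 - I * t) : ℂ)‖ ^ s := by
  unfold osc
  rw [norm_mul, norm_mul, norm_cpow_real, norm_real, Real.norm_of_nonneg (by positivity)]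
  gcongr
  refine mul_le_of_le_one_right (by positivity) ?_
  rw [norm_exp, Real.exp_le_one_iff]
  simp
  positivity

open Complex in
lemma osc_integrable {α s : ℝ} (x : ℝ) {δ : ℝ} (hα : 0 < α) (hs : α < s) (hδ : 0 ≤ δ) :
    IntegrableOn (osc α s x δ) (Ioi 0) := by
  refine (osc_bound_integrable hα hs).mono' (osc_meas α s x δ).aestronglyMeasurable ?_
  filter_upwards [ae_restrict_mem measurableSet_Ioi] with t ht
  exact osc_norm_le hδ ht

open Complex in
/-- Fubini's theorem after writing `(1 - it)^(-s)` as a Gamma integral; the regularisation `δ > 0`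
makes the double integral absolutely convergent. -/
lemma osc_fubini {α s x δ : ℝ} (hα : 0 < α) (hs : 0 < s) (hδ : 0 < δ) :
    Complex.Gamma s * ∫ t in Ioi (0 : ℝ), osc α s x δ t
      = Complex.Gamma α * ∫ y in Ioi (0 : ℝ), ((y ^ (s - 1) * Real.exp (-y) : ℝ) : ℂ)
          * (1 / (δ - I * (x + y))) ^ (α : ℂ) := by
  set F : ℝ → ℝ → ℂ := fun t y => ((t ^ (α - 1) : ℝ) : ℂ) * exp (-((δ - I * x) * t))
    * (((y ^ (s - 1) : ℝ) : ℂ) * exp (-((1 - I * t) * y))) with hF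
  have h1 : Complex.Gamma s * ∫ t in Ioi (0 : ℝ), osc α s x δ t
      = ∫ t in Ioi (0 : ℝ), ∫ y in Ioi (0 : ℝ), F t y := by
    rw [← MeasureTheory.integral_const_mul]
    refine setIntegral_congr_fun measurableSet_Ioi fun t ht => ?_
    have h := laplace_rpow hs (r := 1 - I * t) (by simp)
    have h2 : ∫ y in Ioi (0 : ℝ), F t y = ((t ^ (α - 1) : ℝ) : ℂ) * exp (-((δ - I * x) * t)) *
        ∫ y in Ioi (0 : ℝ), ((y ^ (s - 1) : ℝ) : ℂ) * exp (-((1 - I * t) * y)) := by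
      rw [← MeasureTheory.integral_const_mul]
    rw [h2, h]
    unfold osc
    ring
  have h2 : Complex.Gamma α * ∫ y in Ioi (0 : ℝ), ((y ^ (s - 1) * Real.exp (-y) : ℝ) : ℂ)
          * (1 / (δ - I * (x + y))) ^ (α : ℂ)
      = ∫ y in Ioi (0 : ℝ), ∫ t in Ioi (0 : ℝ), F t y := by
    rw [← MeasureTheory.integral_const_mul]
    refine setIntegral_congr_fun measurableSet_Ioi fun y hy => ?_
    have h := laplace_rpow hα (r := δ - I * (x + y)) (by simpa using hδ)
    have h2 : ∫ t in Ioi (0 : ℝ), F t y = ((y ^ (s - 1) * Real.exp (-y) : ℝ) : ℂ) *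
        ∫ t in Ioi (0 : ℝ), ((t ^ (α - 1) : ℝ) : ℂ) * exp (-((δ - I * (x + y)) * t)) := by
      rw [← MeasureTheory.integral_const_mul]
      refine setIntegral_congr_fun measurableSet_Ioi fun t ht => ?_
      simp only [hF]
      rw [ofReal_mul, ofReal_exp]
      have e : exp (-((δ - I * x) * t)) * exp (-((1 - I * t) * y))
          = exp ((-y : ℝ) : ℂ) * exp (-((δ - I * (x + y)) * t)) := by
        rw [← exp_add, ← exp_add]
        congr 1
        push_cast
        ring
      push_cast at e ⊢
      linear_combination ((t ^ (α - 1) : ℝ) : ℂ) * ((y ^ (s - 1) : ℝ) : ℂ) * e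
    rw [h2, h]
    ring
  rw [h1, h2, integral_integral_swap]
  refine ((gamma_int_scaled hα hδ).mul_prod (gamma_int hs)).mono' ?_ ?_
  · refine Measurable.aestronglyMeasurable ?_
    simp only [hF]
    unfold Function.uncurry
    fun_prop
  · rw [Measure.prod_restrict]
    filter_upwards [ae_restrict_mem (measurableSet_Ioi.prod measurableSet_Ioi)] with p hp
    have h1 : 0 < p.1 := hp.1
    have h2 : 0 < p.2 := hp.2
    simp only [Function.uncurry, hF]
    rw [norm_mul, norm_mul, norm_mul, norm_real, norm_real, norm_exp, norm_exp,
      Real.norm_of_nonneg (by positivity), Real.norm_of_nonneg (by positivity)]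
    simp

open Complex in
/-- The phase `e^(iαπ/2)` responsible for the factor `cos (απ/2)`. -/
lemma one_div_neg_I_cpow (α : ℝ) {z : ℝ} (hz : 0 < z) :
    (1 / (((0 : ℝ) : ℂ) - I * z)) ^ (α : ℂ)
      = exp (I * (α * Real.pi / 2 : ℝ)) * ((z ^ (-α) : ℝ) : ℂ) := by
  have hz' : (z : ℂ) ≠ 0 := by exact_mod_cast hz.ne'
  have e : (1 / (((0 : ℝ) : ℂ) - I * z)) = ((z⁻¹ : ℝ) : ℂ) * I := by
    push_cast
    field_simp
    linear_combination (z : ℂ) * I_sq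
  rw [e, cpow_def_of_ne_zero (by simp [hz'] ), log_ofReal_mul (by positivity) I_ne_zero, log_I,
    Real.rpow_def_of_pos hz, ofReal_exp, ← exp_add, Real.log_inv]
  congr 1
  push_cast
  ring

open Complex in
/-- The limit `δ → 0+` of `osc_fubini`. -/
lemma osc_eq {α s x : ℝ} (hα : 0 < α) (hs : α < s) (hx : 0 < x) :
    Complex.Gamma s * ∫ t in Ioi (0 : ℝ), osc α s x 0 t
      = Complex.Gamma α * (exp (I * (α * Real.pi / 2 : ℝ)) * (trK α s x : ℝ)) := by
  have hs0 : 0 < s := by linarith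
  have t1 : Tendsto (fun δ : ℝ => ∫ t in Ioi (0 : ℝ), osc α s x δ t) (𝓝[>] 0)
      (𝓝 (∫ t in Ioi (0 : ℝ), osc α s x 0 t)) := by
    refine tendsto_integral_filter_of_dominated_convergence _
      (Eventually.of_forall fun δ => (osc_meas α s x δ).aestronglyMeasurable) ?_
      (osc_bound_integrable hα hs) ?_
    · filter_upwards [self_mem_nhdsWithin] with δ hδ
      filter_upwards [ae_restrict_mem measurableSet_Ioi] with t ht
      exact osc_norm_le (le_of_lt hδ) ht
    · refine Eventually.of_forall fun t => tendsto_nhdsWithin_of_tendsto_nhds ?_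
      refine Continuous.tendsto (f := fun δ : ℝ => osc α s x δ t) ?_ 0
      unfold osc
      fun_prop
  have t2 : Tendsto (fun δ : ℝ => ∫ y in Ioi (0 : ℝ), ((y ^ (s - 1) * Real.exp (-y) : ℝ) : ℂ)
          * (1 / (δ - I * (x + y))) ^ (α : ℂ)) (𝓝[>] 0)
      (𝓝 (∫ y in Ioi (0 : ℝ), ((y ^ (s - 1) * Real.exp (-y) : ℝ) : ℂ)
          * (1 / (((0 : ℝ) : ℂ) - I * (x + y))) ^ (α : ℂ))) := by
    refine tendsto_integral_filter_of_dominated_convergence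
      (fun y : ℝ => y ^ (s - 1) * Real.exp (-y) * (x⁻¹) ^ α)
      (Eventually.of_forall fun δ => Measurable.aestronglyMeasurable (by fun_prop)) ?_
      ((gamma_int hs0).mul_const _) ?_
    · refine Eventually.of_forall fun δ => ?_
      filter_upwards [ae_restrict_mem measurableSet_Ioi] with y hy
      have hy : 0 < y := hy
      rw [norm_mul, norm_cpow_real, norm_real, Real.norm_of_nonneg (by positivity)]
      have h : x ≤ ‖(δ - I * (x + y) : ℂ)‖ := by
        have := abs_im_le_norm (δ - I * (x + y) : ℂ)
        simp only [sub_im, ofReal_im, mul_im, I_re, add_im, I_im, add_re, ofReal_re] at this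
        rw [show (0 : ℝ) - (0 * (0 + 0) + 1 * (x + y)) = -(x + y) by ring, abs_neg,
          abs_of_pos (by linarith)] at this
        linarith
      gcongr
      rw [norm_div, norm_one, one_div]
      exact inv_anti₀ hx h
    · filter_upwards [ae_restrict_mem measurableSet_Ioi] with y hy
      have hy : 0 < y := hy
      refine Tendsto.const_mul _ (tendsto_nhdsWithin_of_tendsto_nhds ?_)
      have hne : (((0 : ℝ) : ℂ) - I * (x + y)) ≠ 0 := by
        intro h
        have := congrArg im h
        simp at this
        linarith
      have hc : ContinuousAt (fun δ : ℝ => (1 / (δ - I * (x + y)) : ℂ) ^ (α : ℂ)) 0 := by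
        refine ContinuousAt.cpow ?_ continuousAt_const ?_
        · exact ContinuousAt.div continuousAt_const (by fun_prop) hne
        · have h2 : 0 < normSq (((0 : ℝ) : ℂ) - I * (x + y)) := normSq_pos.2 hne
          right
          rw [one_div, inv_im]
          refine div_ne_zero ?_ h2.ne'
          simp
          linarith
      exact hc.tendsto
  have hE : ∀ᶠ δ : ℝ in 𝓝[>] 0, Complex.Gamma α * ∫ y in Ioi (0 : ℝ),
      ((y ^ (s - 1) * Real.exp (-y) : ℝ) : ℂ) * (1 / (δ - I * (x + y))) ^ (α : ℂ)
      = Complex.Gamma s * ∫ t in Ioi (0 : ℝ), osc α s x δ t := by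
    filter_upwards [self_mem_nhdsWithin] with δ hδ
    exact (osc_fubini hα hs0 hδ).symm
  have := tendsto_nhds_unique (t1.const_mul (Complex.Gamma s))
    ((t2.const_mul (Complex.Gamma α)).congr' hE)
  rw [this]
  congr 1
  unfold trK
  rw [← integral_complex_ofReal, ← MeasureTheory.integral_const_mul]
  refine setIntegral_congr_fun measurableSet_Ioi fun y hy => ?_
  have hy : 0 < y := hy
  have := one_div_neg_I_cpow α (show 0 < x + y by linarith)
  rw [ofReal_add] at this
  rw [this]
  push_cast
  ring

open Complex in
/-- The real part of `osc` is the original integrand times the Jacobian of `v = arctan t`, because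
`1 / (1 - it) = r⁻¹ e^(i arctan t)` with `r = √(1 + t²)`. -/
lemma osc_re {α β x t : ℝ} (ht : 0 < t) :
    |1 / (1 + t ^ 2)| * (Real.sin (Real.arctan t) ^ (α - 1) * Real.cos (Real.arctan t) ^ (β - 1)
      * Real.cos (x * Real.tan (Real.arctan t) + (α + β) * Real.arctan t))
      = (osc α (α + β) x 0 t).re := by
  have hr : 0 < √(1 + t ^ 2) := by positivity
  set ρ := 1 / √(1 + t ^ 2) with hρ
  have hρ0 : 0 < ρ := by positivity
  set θ := Real.arctan t with hθ
  have hcos : Real.cos θ = ρ := Real.cos_arctan t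
  have hsin : Real.sin θ = t * ρ := by rw [hθ, Real.sin_arctan, hρ]; ring
  have hρ2 : 1 / (1 + t ^ 2) = ρ ^ 2 := by
    rw [hρ, div_pow, Real.sq_sqrt (by positivity)]; simp
  have hne : (1 - I * t : ℂ) ≠ 0 := by
    intro h
    have := congrArg re h
    simp at this
  have e1 : (1 / (1 - I * t) : ℂ) = (ρ : ℂ) * exp (θ * I) := by
    rw [exp_mul_I, ← ofReal_cos, ← ofReal_sin, hcos, hsin, div_eq_iff hne]
    have h3 : (ρ : ℂ) ^ 2 * (1 + t ^ 2) = 1 := by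
      have : ρ ^ 2 * (1 + t ^ 2) = 1 := by rw [← hρ2]; field_simp
      exact_mod_cast this
    push_cast
    linear_combination -h3 + (ρ : ℂ) ^ 2 * t ^ 2 * I_sq
  have e2 : (1 / (1 - I * t) : ℂ) ^ ((α + β : ℝ) : ℂ)
      = ((ρ ^ (α + β) : ℝ) : ℂ) * exp (((α + β) * θ : ℝ) * I) := by
    have l1 := Real.neg_pi_div_two_lt_arctan t
    have l2 := Real.arctan_lt_pi_div_two t
    have hpi := Real.pi_pos
    rw [e1, cpow_def_of_ne_zero (mul_ne_zero (by exact_mod_cast hρ0.ne') (exp_ne_zero _)),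
      log_ofReal_mul hρ0 (exp_ne_zero _), log_exp (by simp; linarith) (by simp; linarith),
      Real.rpow_def_of_pos hρ0, ofReal_exp, ← exp_add]
    congr 1
    push_cast
    ring
  have e3 : osc α (α + β) x 0 t = ((t ^ (α - 1) * ρ ^ (α + β) : ℝ) : ℂ) *
      exp ((x * t + (α + β) * θ : ℝ) * I) := by
    unfold osc
    rw [e2]
    have : exp (-((((0 : ℝ) : ℂ) - I * x) * t)) * exp (((α + β) * θ : ℝ) * I)
        = exp ((x * t + (α + β) * θ : ℝ) * I) := by
      rw [← exp_add]
      congr 1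
      push_cast
      ring
    rw [← this]
    push_cast
    ring
  rw [e3, re_ofReal_mul, exp_ofReal_mul_I_re, hρ2, abs_of_pos (by positivity), Real.tan_arctan,
    hcos, hsin, Real.mul_rpow ht.le hρ0.le]
  have e4 : ρ ^ (α + β) = ρ ^ (α - 1) * ρ ^ (β - 1) * ρ ^ 2 := by
    rw [← Real.rpow_natCast, ← Real.rpow_add hρ0, ← Real.rpow_add hρ0]
    congr 1
    push_cast
    ring
  rw [e4]
  ring

lemma arctan_image : Real.arctan '' Ioi 0 = Ioo 0 (Real.pi / 2) := by
  ext v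
  constructor
  · rintro ⟨t, ht, rfl⟩
    exact ⟨Real.arctan_pos.2 ht, Real.arctan_lt_pi_div_two t⟩
  · intro hv
    exact ⟨Real.tan v, Real.tan_pos_of_pos_of_lt_pi_div_two hv.1 hv.2,
      Real.arctan_tan (by linarith [hv.1, Real.pi_pos]) hv.2⟩

lemma sine_cosine_eq {α β x : ℝ} (hα : 0 < α) (hβ : 0 < β) :
    ∫ v in (0 : ℝ)..(Real.pi / 2),
        Real.sin v ^ (α - 1) * Real.cos v ^ (β - 1)
          * Real.cos (x * Real.tan v + (α + β) * v)
      = (∫ t in Ioi (0 : ℝ), osc α (α + β) x 0 t).re := by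
  rw [intervalIntegral.integral_of_le (by positivity), integral_Ioc_eq_integral_Ioo,
    ← arctan_image, integral_image_eq_integral_abs_deriv_smul measurableSet_Ioi
      (fun t _ => (Real.hasDerivAt_arctan t).hasDerivWithinAt) Real.arctan_injective.injOn]
  have h := Complex.reCLM.integral_comp_comm
    (osc_integrable (s := α + β) x hα (by linarith) le_rfl)
  simp only [Complex.reCLM_apply] at h
  rw [← h]
  refine setIntegral_congr_fun measurableSet_Ioi fun t ht => ?_
  exact osc_re ht

/-- ∫₀^{π/2} sin^{α−1}v · cos^{β−1}v · cos(x·tan v + (α+β)v) dv expressed via φ. -/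
theorem kummer_sine_cosine_integral (α β x : ℝ) (hx : 0 < x) (hα : 0 < α) (hβ : 0 < β)
    (hβint : ∀ k : ℤ, β ≠ (k : ℝ)) :
    ∫ v in (0 : ℝ)..(Real.pi / 2),
        Real.sin v ^ (α - 1) * Real.cos v ^ (β - 1)
          * Real.cos (x * Real.tan v + (α + β) * v)
      = Real.cos (α * Real.pi / 2) * (Real.Gamma α * Real.Gamma β / Real.Gamma (α + β))
          * kummerPhi α (1 - β) x
        + Real.cos (α * Real.pi / 2) * Real.Gamma (-β) * x ^ β
          * kummerPhi (α + β) (1 + β) x := by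
  have hs : 0 < α + β := by positivity
  obtain ⟨N, hN⟩ := exists_nat_gt β
  have h1 := trK_eq_kR N hα hβ (by linarith) hβint hx
  have h2 := congrArg Complex.re (osc_eq hα (show α < α + β by linarith) hx)
  rw [Complex.Gamma_ofReal, Complex.Gamma_ofReal, Complex.re_ofReal_mul, Complex.re_ofReal_mul,
    Complex.re_mul_ofReal, mul_comm Complex.I, Complex.exp_ofReal_mul_I_re,
    ← sine_cosine_eq hα hβ] at h2
  have h3 := (Real.Gamma_pos_of_pos hs).ne'
  refine mul_left_cancel₀ h3 (h2.trans ?_)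
  rw [show Real.cos (α * Real.pi / 2) * (Real.Gamma α * Real.Gamma β / Real.Gamma (α + β))
          * kummerPhi α (1 - β) x
        + Real.cos (α * Real.pi / 2) * Real.Gamma (-β) * x ^ β
          * kummerPhi (α + β) (1 + β) x = Real.cos (α * Real.pi / 2) * kR α β x by
      unfold kR; ring, ← h1]
  field_simp
end

section
/- For every real x ≥ 0 and every real β > 0, ∫₀^{π/2} (cos^{β−1}(v)/sin v) · sin(x·tan v + βv) dv = π/2. -/
/-!
Put `w = e^{2iv}`. Then `(1 + w) / 2 = cos v · e^{iv}` and `(w - 1) / (w + 1) = i tan v`, so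
`F w = ((1 + w) / 2) ^ β · exp (x (w - 1) / (w + 1))` takes the boundary value
`cos^β v · e^{i (βv + x tan v)}`. Moreover `w² - 1 = 4i sin v cos v · w`. Consequently, for
`H w = (F w - (1 + w) / 2) / (w² - 1)`, the imaginary part of `i w H w` is a quarter of the
integrand minus one (`klh_im`), and it suffices to show that this has integral zero over the
circle, the integrand being even in `v`.

The function `H` is holomorphic on `Re w > -1`: the singularity at `1` is removable since
`F 1 = 1`, which is why `H` is written with `dslope`. So Cauchy's theorem gives a zero integral
on every circle of radius `r < 1`. As `x ≥ 0`, the exponential is bounded by `1` on the disc, and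
`|H w| ≤ M (|1 + w| / 2) ^ (min β 1 - 1)` there (`klH_bound`). Together with
`|1 + r e^{iθ}| ≥ |θ - π| / π` (`kl_one_add_norm`) this gives an integrable bound independent of
`r`, because `min β 1 - 1 > -1`. Dominated convergence as `r → 1` concludes
(`klh_integrable_and_integral`).
-/

open MeasureTheory intervalIntegral
open Filter Topology

/-! ### The holomorphic functions `F` and `H` -/

/-- The function `((1 + w) / 2) ^ β * exp (x (w - 1) / (w + 1))`, with the principal power. -/
noncomputable def klF (β x : ℝ) (w : ℂ) : ℂ :=
  ((1 + w) / 2) ^ (β : ℂ) * Complex.exp (x * ((w - 1) / (w + 1)))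

/-- `F w - (1 + w) / 2`; the subtracted term is `F` for `β = 1`, `x = 0`. -/
noncomputable def klK (β x : ℝ) (w : ℂ) : ℂ := klF β x w - (1 + w) / 2

/-- `(F w - (1 + w) / 2) / (w² - 1)`, with the removable singularity at `1` filled in by
`dslope`. -/
noncomputable def klH (β x : ℝ) (w : ℂ) : ℂ := dslope (klK β x) 1 w / (w + 1)

/-- The half-plane `Re w > -1`, which contains the closed unit disc except for `-1`. -/
def klU : Set ℂ := {w | 0 < (1 + w).re}

lemma klU_open : IsOpen klU :=
  isOpen_lt continuous_const (Complex.continuous_re.comp (by fun_prop))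

lemma klU_one_mem : (1 : ℂ) ∈ klU := by simp [klU]

lemma klU_ne {w : ℂ} (hw : w ∈ klU) : w + 1 ≠ 0 := by
  intro h
  have : 0 < (1 + w).re := hw
  rw [add_comm, h] at this
  simp at this

lemma klU_mem {w : ℂ} (hw : ‖w‖ ≤ 1) (hne : w + 1 ≠ 0) : w ∈ klU := by
  have h1 : w.re * w.re + w.im * w.im ≤ 1 := by
    rw [← Complex.normSq_apply, Complex.normSq_eq_norm_sq]
    nlinarith [norm_nonneg w]
  have h2 : w.re ≥ -1 := by nlinarith [mul_self_nonneg w.im]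
  rcases h2.lt_or_eq with h | h
  · change 0 < (1 + w).re
    simp only [Complex.add_re, Complex.one_re]
    linarith
  · exfalso
    apply hne
    have : w.im = 0 := by
      rw [← h] at h1
      nlinarith
    apply Complex.ext <;> simp [this, ← h]

lemma klK_one (β x : ℝ) : klK β x 1 = 0 := by
  norm_num [klK, klF]

lemma klK_diff (β x : ℝ) : DifferentiableOn ℂ (klK β x) klU := by
  intro w hw
  have h0 : (1 + w) / 2 ∈ Complex.slitPlane := by
    left
    have : 0 < (1 + w).re := hw
    have e : ((1 + w) / 2).re = (1 + w).re / 2 := by simp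
    rw [e]; positivity
  have h1 := klU_ne hw
  apply DifferentiableAt.differentiableWithinAt
  unfold klK klF
  refine DifferentiableAt.sub (DifferentiableAt.mul ?_ ?_) (by fun_prop)
  · exact DifferentiableAt.cpow (by fun_prop) (by fun_prop) h0
  · refine DifferentiableAt.cexp (DifferentiableAt.mul (by fun_prop) ?_)
    exact DifferentiableAt.div (by fun_prop) (by fun_prop) h1

lemma klD_diff (β x : ℝ) : DifferentiableOn ℂ (dslope (klK β x) 1) klU :=
  (Complex.differentiableOn_dslope (klU_open.mem_nhds klU_one_mem)).2 (klK_diff β x)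

lemma klH_diff (β x : ℝ) : DifferentiableOn ℂ (klH β x) klU :=
  (klD_diff β x).div (by fun_prop) fun _ hw => klU_ne hw

lemma klH_of_ne (β x : ℝ) {w : ℂ} (hw : w ≠ 1) :
    klH β x w = klK β x w / ((w - 1) * (w + 1)) := by
  rw [klH, dslope_of_ne _ hw, slope_def_module, klK_one, sub_zero, smul_eq_mul]
  rw [inv_mul_eq_div, div_div]

/-! ### Bounds on the disc -/

/-- `w ↦ (w - 1) / (w + 1)` maps the unit disc to the left half-plane, so the exponential factor
of `klF` has norm at most `1`. -/
lemma klF_norm_le (β : ℝ) {x : ℝ} (hx : 0 ≤ x) {w : ℂ} (hw : ‖w‖ ≤ 1) :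
    ‖klF β x w‖ ≤ (‖1 + w‖ / 2) ^ β := by
  rw [klF, norm_mul, Complex.norm_cpow_real, norm_div, Complex.norm_exp]
  have h : ((x : ℂ) * ((w - 1) / (w + 1))).re ≤ 0 := by
    rw [Complex.re_ofReal_mul]
    apply mul_nonpos_of_nonneg_of_nonpos hx
    rw [Complex.div_re, ← add_div]
    apply div_nonpos_of_nonpos_of_nonneg _ (Complex.normSq_nonneg _)
    have h1 : w.re * w.re + w.im * w.im ≤ 1 := by
      rw [← Complex.normSq_apply, Complex.normSq_eq_norm_sq]
      nlinarith [norm_nonneg w]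
    simp
    nlinarith
  have h2 := Real.exp_le_one_iff.2 h
  have h3 : (0 : ℝ) ≤ (‖1 + w‖ / ‖(2 : ℂ)‖) ^ β := by positivity
  simp only [Complex.norm_ofNat] at h3 ⊢
  nlinarith

/-- The bound near `1` comes from compactness of the right half-disc; on the left half-disc
`|w - 1| ≥ 1`. Replacing `β - 1` by `min β 1 - 1` makes the exponent nonpositive, so that lower
bounds on `|1 + w|` yield upper bounds. -/
lemma klH_bound (β : ℝ) {x : ℝ} (hx : 0 ≤ x) :
    ∃ M : ℝ, 0 ≤ M ∧ ∀ w : ℂ, ‖w‖ ≤ 1 → w + 1 ≠ 0 →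
      ‖klH β x w‖ ≤ M * (‖1 + w‖ / 2) ^ (min β 1 - 1) := by
  have hγ : min β 1 - 1 ≤ 0 := by linarith [min_le_right β 1]
  have hcomp : IsCompact (Metric.closedBall (0 : ℂ) 1 ∩ {w : ℂ | 0 ≤ w.re}) :=
    (isCompact_closedBall 0 1).inter_right
      (isClosed_le continuous_const Complex.continuous_re)
  have hsub : Metric.closedBall (0 : ℂ) 1 ∩ {w : ℂ | 0 ≤ w.re} ⊆ klU := by
    rintro w ⟨-, h⟩
    have h' : 0 ≤ w.re := h
    change 0 < (1 + w).re
    simp only [Complex.add_re, Complex.one_re]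
    linarith
  obtain ⟨C, hC⟩ := hcomp.exists_bound_of_continuousOn ((klH_diff β x).continuousOn.mono hsub)
  refine ⟨max C 1, by positivity, fun w hw hne => ?_⟩
  have hρ0 : 0 < ‖1 + w‖ / 2 := by
    have : 0 < ‖1 + w‖ := by rw [add_comm]; exact norm_pos_iff.2 hne
    positivity
  have hρ1 : ‖1 + w‖ / 2 ≤ 1 := by
    have := norm_add_le 1 w
    rw [norm_one] at this
    linarith
  have hone : 1 ≤ (‖1 + w‖ / 2) ^ (min β 1 - 1) :=
    Real.one_le_rpow_of_pos_of_le_one_of_nonpos hρ0 hρ1 hγ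
  by_cases hre : 0 ≤ w.re
  · have := hC w ⟨by simpa using hw, hre⟩
    calc _ ≤ C := this
      _ ≤ max C 1 := le_max_left _ _
      _ ≤ _ := le_mul_of_one_le_right (by positivity) hone
  · push Not at hre
    have hw1 : w ≠ 1 := by rintro rfl; simp at hre; linarith
    have hd : 1 ≤ ‖w - 1‖ := by
      have := Complex.abs_re_le_norm (w - 1)
      simp only [Complex.sub_re, Complex.one_re] at this
      rw [abs_of_neg (by linarith)] at this
      linarith
    have hK : ‖klK β x w‖ ≤ (‖1 + w‖ / 2) ^ β + ‖1 + w‖ / 2 := by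
      refine (norm_sub_le _ _).trans (add_le_add (klF_norm_le β hx hw) ?_)
      simp
    have hb : (‖1 + w‖ / 2) ^ (β - 1) ≤ (‖1 + w‖ / 2) ^ (min β 1 - 1) :=
      Real.rpow_le_rpow_of_exponent_ge hρ0 hρ1 (by linarith [min_le_left β 1])
    rw [klH_of_ne β x hw1, norm_div, norm_mul, add_comm w 1]
    have hsplit : (‖1 + w‖ / 2) ^ β = (‖1 + w‖ / 2) ^ (β - 1) * (‖1 + w‖ / 2) := by
      rw [← Real.rpow_add_one hρ0.ne', sub_add_cancel]
    set ρ := ‖1 + w‖ / 2 with hρ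
    have hρ' : ‖1 + w‖ = 2 * ρ := by rw [hρ]; ring
    rw [hρ', div_le_iff₀ (by positivity)]
    set A := ρ ^ (min β 1 - 1)
    calc ‖klK β x w‖ ≤ ρ ^ (β - 1) * ρ + ρ := by rw [← hsplit]; exact hK
      _ ≤ A * ρ + A * ρ := by nlinarith
      _ = 1 * A * (1 * (2 * ρ)) := by ring
      _ ≤ max C 1 * A * (‖w - 1‖ * (2 * ρ)) := by
        gcongr
        exact le_max_right _ _

/-- Jordan's inequality `|θ - π| / π ≤ |cos (θ / 2)|` combined with
`|cos (θ / 2)| ≤ |1 + r e^{iθ}|`. -/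
lemma kl_one_add_norm {r θ : ℝ} (h0 : 0 ≤ r) (hθ : θ ∈ Set.Icc 0 (2 * Real.pi)) :
    |θ - Real.pi| / Real.pi ≤ ‖1 + circleMap 0 r θ‖ := by
  have hpi := Real.pi_pos
  have hJ : |θ - Real.pi| / Real.pi ≤ |Real.cos (θ / 2)| := by
    have := Real.mul_abs_le_abs_sin (x := (θ - Real.pi) / 2) (by
      rw [abs_div, abs_two]
      gcongr
      rw [abs_le]; constructor <;> linarith [hθ.1, hθ.2])
    rw [show (θ - Real.pi) / 2 = θ / 2 - Real.pi / 2 by ring, Real.sin_sub_pi_div_two, abs_neg]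
      at this
    rw [show θ / 2 - Real.pi / 2 = (θ - Real.pi) / 2 by ring, abs_div, abs_two] at this
    calc _ = 2 / Real.pi * (|θ - Real.pi| / 2) := by field_simp
      _ ≤ _ := this
  refine hJ.trans ?_
  apply abs_le_of_sq_le_sq _ (norm_nonneg _)
  rw [← Complex.normSq_eq_norm_sq, Complex.normSq_apply]
  simp only [circleMap, zero_add, Complex.add_re, Complex.add_im, Complex.one_re, Complex.one_im,
    Complex.re_ofReal_mul, Complex.im_ofReal_mul, Complex.exp_ofReal_mul_I_re,
    Complex.exp_ofReal_mul_I_im]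
  rw [Real.cos_sq, show 2 * (θ / 2) = θ by ring]
  -- The difference of both sides is affine in `cos θ` and nonnegative at `cos θ = ±1`.
  nlinarith [congrArg (r ^ 2 * ·) (Real.sin_sq_add_cos_sq θ),
    mul_nonneg (by linarith [Real.neg_one_le_cos θ] : 0 ≤ 1 + Real.cos θ)
      (by nlinarith : 0 ≤ (1 + r) ^ 2 - 1),
    mul_nonneg (by linarith [Real.cos_le_one θ] : 0 ≤ 1 - Real.cos θ) (sq_nonneg (1 - r))]

lemma kl_bound_integrable {γ : ℝ} (hγ : -1 < γ) (M : ℝ) :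
    IntervalIntegrable (fun θ : ℝ => M * (|θ - Real.pi| / Real.pi / 2) ^ γ) volume
      0 (2 * Real.pi) := by
  have hpi := Real.pi_pos
  have h1 : IntervalIntegrable (fun u : ℝ => |u| ^ γ) volume (-Real.pi) Real.pi := by
    have hp : IntervalIntegrable (fun u : ℝ => |u| ^ γ) volume 0 Real.pi := by
      refine (intervalIntegrable_rpow' hγ).congr fun u hu => ?_
      rw [Set.uIoc_of_le hpi.le] at hu
      simp only [abs_of_pos hu.1]
    have hm : IntervalIntegrable (fun u : ℝ => |u| ^ γ) volume (-Real.pi) 0 := by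
      have := hp.comp_sub_left 0
      simp only [zero_sub, abs_neg, neg_zero] at this
      exact this.symm
    exact hm.trans hp
  have h2 := h1.comp_sub_right Real.pi
  rw [neg_add_cancel, ← two_mul] at h2
  refine ((h2.const_mul (M * (2 * Real.pi)⁻¹ ^ γ))).congr fun θ _ => ?_
  rw [div_div, div_eq_mul_inv, Real.mul_rpow (abs_nonneg _) (by positivity), mul_comm Real.pi 2]
  ring

/-! ### Cauchy's theorem up to the boundary -/

/-- The boundary values `i e^{iθ} H(e^{iθ})`, where `i e^{iθ}` is the derivative of `circleMap`.
The value at `θ = π` is irrelevant. -/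
noncomputable def klh (β x θ : ℝ) : ℂ :=
  deriv (circleMap 0 1) θ • klH β x (circleMap 0 1 θ)

lemma kl_norm_circleMap {r : ℝ} (h0 : 0 ≤ r) (θ : ℝ) : ‖circleMap 0 r θ‖ = r := by
  simp [abs_of_nonneg h0]

lemma klh_integrable_and_integral {β x : ℝ} (hx : 0 ≤ x) (hβ : 0 < β) :
    IntervalIntegrable (klh β x) volume 0 (2 * Real.pi) ∧
      ∫ θ in (0 : ℝ)..(2 * Real.pi), klh β x θ = 0 := by
  have hpi := Real.pi_pos
  obtain ⟨M, hM, hb⟩ := klH_bound β hx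
  set γ := min β 1 - 1 with hγdef
  have hγ0 : γ ≤ 0 := by linarith [min_le_right β 1]
  have hγ1 : -1 < γ := by
    have : 0 < min β 1 := lt_min hβ one_pos
    linarith
  have hbi := kl_bound_integrable hγ1 M
  have hnepi : ∀ᵐ θ : ℝ, θ ≠ Real.pi := Measure.ae_ne volume Real.pi
  have hne : ∀ r θ : ℝ, 0 ≤ r → r ≤ 1 → θ ≠ Real.pi → θ ∈ Set.Icc 0 (2 * Real.pi) →
      circleMap 0 r θ + 1 ≠ 0 := by
    intro r θ h0 h1 hθ hθI h
    have := kl_one_add_norm h0 hθI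
    rw [add_comm, h, norm_zero] at this
    have h2 : 0 < |θ - Real.pi| / Real.pi := div_pos (abs_pos.2 (sub_ne_zero.2 hθ)) hpi
    linarith
  have hbound : ∀ r θ : ℝ, 0 ≤ r → r ≤ 1 → θ ≠ Real.pi → θ ∈ Set.Icc 0 (2 * Real.pi) →
      ‖deriv (circleMap 0 r) θ • klH β x (circleMap 0 r θ)‖
        ≤ M * (|θ - Real.pi| / Real.pi / 2) ^ γ := by
    intro r θ h0 h1 hθ hθI
    have hpos : 0 < |θ - Real.pi| / Real.pi / 2 := by
      have := abs_pos.2 (sub_ne_zero.2 hθ)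
      positivity
    rw [norm_smul, deriv_circleMap, norm_mul, kl_norm_circleMap h0, Complex.norm_I, mul_one]
    calc r * ‖klH β x (circleMap 0 r θ)‖ ≤ 1 * ‖klH β x (circleMap 0 r θ)‖ := by gcongr
      _ ≤ M * (‖1 + circleMap 0 r θ‖ / 2) ^ γ := by
        rw [one_mul]
        exact hb _ (by rwa [kl_norm_circleMap h0]) (hne r θ h0 h1 hθ hθI)
      _ ≤ _ := by
        apply mul_le_mul_of_nonneg_left _ hM
        apply Real.rpow_le_rpow_of_nonpos hpos _ hγ0
        gcongr
        exact kl_one_add_norm h0 hθI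
  have hr : ∀ᶠ r : ℝ in 𝓝[<] 1, 0 < r ∧ r < 1 := Ioo_mem_nhdsLT one_pos
  have hmeas : ∀ᶠ r : ℝ in 𝓝[<] 1, AEStronglyMeasurable
      (fun θ => deriv (circleMap 0 r) θ • klH β x (circleMap 0 r θ))
      (volume.restrict (Set.uIoc 0 (2 * Real.pi))) := by
    filter_upwards [hr] with r hr
    apply Continuous.aestronglyMeasurable
    simp only [smul_eq_mul, deriv_circleMap]
    refine Continuous.mul ?_ ?_
    · exact (continuous_circleMap 0 r).mul continuous_const
    · refine (klH_diff β x).continuousOn.comp_continuous (continuous_circleMap 0 r) fun θ => ?_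
      have hn := kl_norm_circleMap hr.1.le θ
      refine klU_mem (by rw [hn]; exact hr.2.le) fun h => ?_
      rw [eq_neg_of_add_eq_zero_left h, norm_neg, norm_one] at hn
      linarith [hr.2]
  have hlim : ∀ᵐ θ : ℝ, θ ∈ Set.uIoc 0 (2 * Real.pi) →
      Tendsto (fun r : ℝ => deriv (circleMap 0 r) θ • klH β x (circleMap 0 r θ)) (𝓝[<] 1)
        (𝓝 (klh β x θ)) := by
    filter_upwards [hnepi] with θ hθ hθI
    rw [Set.uIoc_of_le (by positivity)] at hθI
    refine Tendsto.mono_left ?_ nhdsWithin_le_nhds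
    have hc : Continuous fun r : ℝ => circleMap 0 r θ := by
      unfold circleMap; fun_prop
    have hmem : circleMap 0 1 θ ∈ klU :=
      klU_mem (kl_norm_circleMap zero_le_one θ).le
        (hne 1 θ zero_le_one le_rfl hθ ⟨hθI.1.le, hθI.2⟩)
    have hH : ContinuousAt (klH β x) (circleMap 0 1 θ) :=
      (klH_diff β x).continuousOn.continuousAt (klU_open.mem_nhds hmem)
    refine Tendsto.smul ?_ ?_
    · simp only [deriv_circleMap]
      exact (hc.mul continuous_const).tendsto 1
    · exact ContinuousAt.comp (f := fun r : ℝ => circleMap 0 r θ) hH hc.continuousAt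
  have hbd : ∀ᶠ r : ℝ in 𝓝[<] 1, ∀ᵐ θ : ℝ, θ ∈ Set.uIoc 0 (2 * Real.pi) →
      ‖deriv (circleMap 0 r) θ • klH β x (circleMap 0 r θ)‖
        ≤ M * (|θ - Real.pi| / Real.pi / 2) ^ γ := by
    filter_upwards [hr] with r hr
    filter_upwards [hnepi] with θ hθ hθI
    rw [Set.uIoc_of_le (by positivity)] at hθI
    exact hbound r θ hr.1.le hr.2.le hθ ⟨hθI.1.le, hθI.2⟩
  have hT := intervalIntegral.tendsto_integral_filter_of_dominated_convergence
    _ hmeas hbd hbi hlim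
  have hzero : ∀ᶠ r : ℝ in 𝓝[<] 1, ∫ θ in (0 : ℝ)..(2 * Real.pi),
      deriv (circleMap 0 r) θ • klH β x (circleMap 0 r θ) = 0 := by
    filter_upwards [hr] with r hr
    have hsub : Metric.closedBall (0 : ℂ) r ⊆ klU := by
      intro w hw
      have hn : ‖w‖ ≤ r := by simpa using hw
      refine klU_mem (hn.trans hr.2.le) fun h => ?_
      rw [eq_neg_of_add_eq_zero_left h, norm_neg, norm_one] at hn
      linarith [hr.2]
    exact Complex.circleIntegral_eq_zero_of_differentiable_on_off_countable hr.1.le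
      Set.countable_empty ((klH_diff β x).continuousOn.mono hsub) fun z hz =>
        (klH_diff β x).differentiableAt
          (klU_open.mem_nhds (hsub (Metric.ball_subset_closedBall hz.1)))
  refine ⟨?_, tendsto_nhds_unique (hT.congr' hzero) tendsto_const_nhds |> fun h => ?_⟩
  · refine hbi.mono_fun ?_ ?_
    -- Measurability of the boundary values: they are a limit of continuous functions.
    · have hae : ∀ᵐ θ ∂(volume.restrict (Set.uIoc 0 (2 * Real.pi))),
          Tendsto (fun r : ℝ => deriv (circleMap 0 r) θ • klH β x (circleMap 0 r θ)) (𝓝[<] 1)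
            (𝓝 (klh β x θ)) := (ae_restrict_iff' measurableSet_uIoc).2 hlim
      obtain ⟨u, hu⟩ := (𝓝[<] (1 : ℝ)).exists_seq_tendsto
      obtain ⟨N, hN⟩ := eventually_atTop.1 (hu.eventually hmeas)
      refine aestronglyMeasurable_of_tendsto_ae atTop
        (f := fun n θ => deriv (circleMap 0 (u (n + N))) θ • klH β x (circleMap 0 (u (n + N)) θ))
        (fun n => hN _ (Nat.le_add_left N n)) ?_
      filter_upwards [hae] with θ hθ
      exact hθ.comp (hu.comp (tendsto_add_atTop_nat N))
    · refine (ae_restrict_iff' measurableSet_uIoc).2 ?_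
      filter_upwards [hnepi] with θ hθ hθI
      rw [Set.uIoc_of_le (by positivity)] at hθI
      exact (hbound 1 θ zero_le_one le_rfl hθ ⟨hθI.1.le, hθI.2⟩).trans (le_abs_self _)
  · exact h

/-! ### Boundary values in terms of `v = θ / 2` -/

/-- Here `i w / (w² - 1) = 1 / (4 sin v cos v)` is real, so only `Im (F w - (1 + w) / 2)` is
needed. -/
lemma klh_im {β x v : ℝ} (h1 : -(Real.pi / 2) < v) (h2 : v < Real.pi / 2) (h0 : v ≠ 0) :
    (klh β x (2 * v)).im = (1 / 4) * (Real.cos v ^ (β - 1) / Real.sin v *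
      Real.sin (x * Real.tan v + β * v) - 1) := by
  have hpi := Real.pi_pos
  have hc : 0 < Real.cos v := Real.cos_pos_of_mem_Ioo ⟨h1, h2⟩
  have hs : Real.sin v ≠ 0 := by
    intro h
    exact h0 ((Real.sin_eq_zero_iff_of_lt_of_lt (by linarith) (by linarith)).1 h)
  set e : ℂ := Complex.exp (v * Complex.I) with he
  have hee : e = Real.cos v + Real.sin v * Complex.I := by
    rw [he, Complex.exp_mul_I, Complex.ofReal_cos, Complex.ofReal_sin]
  have hcs : (Real.cos v : ℂ) ^ 2 + (Real.sin v : ℂ) ^ 2 = 1 := by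
    exact_mod_cast Real.cos_sq_add_sin_sq v
  have hc0 : (Real.cos v : ℂ) ≠ 0 := by exact_mod_cast hc.ne'
  have hs0 : (Real.sin v : ℂ) ≠ 0 := by exact_mod_cast hs
  have he0 : e ≠ 0 := Complex.exp_ne_zero _
  set w := circleMap 0 1 (2 * v) with hw
  have hwe : w = e ^ 2 := by
    rw [hw, he, ← Complex.exp_nat_mul]
    simp [circleMap, mul_assoc]
  have hp : 1 + w = 2 * Real.cos v * e := by
    rw [hwe, hee]
    linear_combination -hcs + (Real.sin v : ℂ) ^ 2 * Complex.I_sq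
  have hm : w - 1 = 2 * Complex.I * Real.sin v * e := by
    rw [hwe, hee]
    linear_combination hcs - (Real.sin v : ℂ) ^ 2 * Complex.I_sq
  have hw1 : w ≠ 1 := by
    intro h
    rw [h, sub_self] at hm
    have : 2 * Complex.I * Real.sin v * e ≠ 0 := by
      simp only [ne_eq, mul_eq_zero, not_or]
      exact ⟨⟨⟨two_ne_zero, Complex.I_ne_zero⟩, hs0⟩, he0⟩
    exact this hm.symm
  have hF : klF β x w = ((Real.cos v ^ β : ℝ) : ℂ) *
      Complex.exp ((x * Real.tan v + β * v : ℝ) * Complex.I) := by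
    have hA : (1 + w) / 2 = Complex.exp ((Real.log (Real.cos v) : ℝ) + v * Complex.I) := by
      rw [hp, Complex.exp_add, ← Complex.ofReal_exp, Real.exp_log hc]
      ring
    have hB : (w - 1) / (w + 1) = Real.tan v * Complex.I := by
      rw [hm, add_comm, hp, Real.tan_eq_sin_div_cos, Complex.ofReal_div]
      field_simp
    rw [klF, hB, hA, Complex.cpow_def_of_ne_zero (Complex.exp_ne_zero _),
      Complex.log_exp (by simp; linarith) (by simp; linarith),
      Real.rpow_def_of_pos hc, Complex.ofReal_exp, ← Complex.exp_add, ← Complex.exp_add]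
    congr 1
    push_cast
    ring
  have hh : klh β x (2 * v) = klK β x w * ((1 / (4 * Real.sin v * Real.cos v) : ℝ) : ℂ) := by
    rw [klh, deriv_circleMap, ← hw, klH_of_ne β x hw1, hm, add_comm w 1, hp, smul_eq_mul, hwe]
    push_cast
    have hI := Complex.I_ne_zero
    rw [← Complex.ofReal_sin, ← Complex.ofReal_cos]
    field_simp
    norm_num
  have hKim : (klK β x w).im = Real.cos v ^ β * Real.sin (x * Real.tan v + β * v)
      - Real.cos v * Real.sin v := by
    rw [klK, hF, hp, Complex.sub_im, Complex.im_ofReal_mul, Complex.exp_ofReal_mul_I_im]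
    congr 1
    rw [show 2 * (Real.cos v : ℂ) * e / 2 = Real.cos v * e by ring, Complex.im_ofReal_mul, he,
      Complex.exp_ofReal_mul_I_im]
  rw [hh, Complex.im_mul_ofReal, hKim, Real.rpow_sub_one hc.ne']
  field_simp

theorem kummer_liouville_integral (β x : ℝ) (hx : 0 ≤ x) (hβ : 0 < β) :
    ∫ v in (0 : ℝ)..(Real.pi / 2),
        Real.cos v ^ (β - 1) / Real.sin v * Real.sin (x * Real.tan v + β * v)
      = Real.pi / 2 := by
  have hpi := Real.pi_pos
  obtain ⟨hint, hzero⟩ := klh_integrable_and_integral hx hβ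
  set k : ℝ → ℝ := fun θ => (klh β x θ).im with hk
  have hkint : IntervalIntegrable k volume 0 (2 * Real.pi) :=
    ⟨hint.1.im, hint.2.im⟩
  have hkzero : ∫ θ in (0 : ℝ)..(2 * Real.pi), k θ = 0 := by
    have := Complex.imCLM.intervalIntegral_comp_comm hint
    rw [hzero] at this
    simpa using this
  have hk1 : IntervalIntegrable k volume 0 Real.pi :=
    hkint.mono_set (by
      rw [Set.uIcc_of_le hpi.le, Set.uIcc_of_le (by linarith)]
      exact Set.Icc_subset_Icc le_rfl (by linarith))
  have hk2 : IntervalIntegrable k volume Real.pi (2 * Real.pi) :=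
    hkint.mono_set (by
      rw [Set.uIcc_of_le (by linarith), Set.uIcc_of_le (by linarith)]
      exact Set.Icc_subset_Icc hpi.le le_rfl)
  -- `v ↦ -v` is `θ ↦ 2π - θ` on the circle, and `klh_im` is even in `v`.
  have hsymm : ∫ θ in Real.pi..(2 * Real.pi), k θ = ∫ θ in (0 : ℝ)..Real.pi, k θ := by
    have h := intervalIntegral.integral_comp_sub_left (a := 0) (b := Real.pi) k (2 * Real.pi)
    rw [sub_zero, show 2 * Real.pi - Real.pi = Real.pi by ring] at h
    rw [← h]
    apply intervalIntegral.integral_congr_ae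
    filter_upwards [Measure.ae_ne volume Real.pi] with θ hθ hθI
    rw [Set.uIoc_of_le hpi.le] at hθI
    have hlt : θ < Real.pi := lt_of_le_of_ne hθI.2 hθ
    have hper : klh β x (2 * Real.pi - θ) = klh β x (2 * (-(θ / 2))) := by
      have : circleMap 0 1 (2 * Real.pi - θ) = circleMap 0 1 (2 * (-(θ / 2))) := by
        rw [show 2 * Real.pi - θ = 2 * (-(θ / 2)) + 2 * Real.pi by ring]
        exact periodic_circleMap 0 1 _
      simp only [klh, deriv_circleMap, this]
    have e2 : klh β x θ = klh β x (2 * (θ / 2)) := by rw [mul_div_cancel₀ _ two_ne_zero]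
    simp only [hk]
    have hpos := hθI.1
    rw [hper, e2, klh_im (by linarith) (by linarith) (by simp; exact hpos.ne'),
      klh_im (by linarith) (by linarith) (by positivity), Real.cos_neg, Real.sin_neg,
      Real.tan_neg,
      show x * -Real.tan (θ / 2) + β * -(θ / 2) = -(x * Real.tan (θ / 2) + β * (θ / 2)) by ring,
      Real.sin_neg, div_neg, neg_mul_neg]
  have hhalf : ∫ θ in (0 : ℝ)..Real.pi, k θ = 0 := by
    have := intervalIntegral.integral_add_adjacent_intervals hk1 hk2
    rw [hsymm, hkzero] at this
    linarith
  have hsc : ∫ v in (0 : ℝ)..(Real.pi / 2), k (2 * v) = 0 := by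
    rw [intervalIntegral.integral_comp_mul_left k two_ne_zero, mul_zero,
      mul_div_cancel₀ _ two_ne_zero, hhalf, smul_zero]
  have hsi : IntervalIntegrable (fun v => k (2 * v)) volume 0 (Real.pi / 2) := by
    have := hk1.comp_mul_left (c := 2)
    rwa [zero_div] at this
  have hfin : ∫ v in (0 : ℝ)..(Real.pi / 2), (4 * k (2 * v) + 1) = Real.pi / 2 := by
    rw [intervalIntegral.integral_add (hsi.const_mul 4) intervalIntegrable_const,
      intervalIntegral.integral_const_mul, hsc]
    simp
  conv_rhs => rw [← hfin]
  apply intervalIntegral.integral_congr_ae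
  filter_upwards [Measure.ae_ne volume (Real.pi / 2)] with v hv hvI
  rw [Set.uIoc_of_le (by linarith)] at hvI
  have hpos := hvI.1
  simp only [hk]
  rw [klh_im (by linarith) (lt_of_le_of_ne hvI.2 hv) hpos.ne']
  ring
end

section
/- For all real x > 0, α > 0, and 0 < β < 1, ∫₀^{π/2} sin^{α−1}(v) · cos^{β−1}(v) · sin(x·tan v − (α+β)v + (α/2 + β)π) dv = π·Γ(α)·φ(α, 1−β, −x) / (Γ(1−β)·Γ(α+β)). -/
/-! With `t = tan v` the integral becomes the imaginary part of `e ^ (iπβ)` times the integral of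
`z ^ (a - 1) (1 + z) ^ (-(a + β)) e ^ (x z)`, at `a = α`, along the ray from `0` to `i∞`
(`tan_subst_value`).

The integral along the ray in direction `w` is holomorphic in `w` on the open second quadrant and
invariant under positive scaling of `w`, so it does not depend on `w` (`rayInt_eq_of_quadrant`). If
`α + β < 1`, the integrand is dominated uniformly up to both ends of the arc from `i` to `-1`, and
the ray can be rotated onto the upper edge of the negative axis (`rayInt_I_eq`). There the factor
`e ^ (iπβ)` makes the integrand real beyond the branch point `-1`, while between `0` and `-1` its
phase is `π (α + β)`. Hence the integral is
`sin (π (α + β)) ∫₀¹ r ^ (α - 1) (1 - r) ^ (-α - β) e ^ (-x r) dr`, which expanding the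
exponential, Beta integrals and the reflection formula turn into the claimed value (`base_case`).

For general `α > 0` both sides are continued in `α`. The ray integral in direction `i` is
holomorphic in `a` for `0 < Re a` (`differentiableAt_rayInt_param`); the imaginary part is
replaced by `(P a - conj (P (conj a))) / (2 i)`, which is holomorphic and agrees with it for real
`a`. The identity theorem then extends the formula from `0 < α < 1 - β` (`im_rayInt_eq_kummer`).
-/

open MeasureTheory intervalIntegral
open scoped Nat

/-! ### Holomorphy of parameter integrals -/

/-- A parameter integral of holomorphic functions with an integrable majorant is holomorphic. No
bound on the derivative is needed, since Cauchy's estimate on a smaller disc supplies one. -/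
lemma differentiableAt_integral_of_dominated {μ : Measure ℝ} {F : ℂ → ℝ → ℂ} {z₀ : ℂ} {R : ℝ}
    {bound : ℝ → ℝ} (hR : 0 < R)
    (hmeas : ∀ z ∈ Metric.ball z₀ R, AEStronglyMeasurable (F z) μ)
    (hdiff : ∀ᵐ t ∂μ, DifferentiableOn ℂ (fun z => F z t) (Metric.ball z₀ R))
    (hbound : ∀ᵐ t ∂μ, ∀ z ∈ Metric.ball z₀ R, ‖F z t‖ ≤ bound t)
    (hint : Integrable bound μ) :
    DifferentiableAt ℂ (fun z => ∫ t, F z t ∂μ) z₀ := by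
  have hz₀ : z₀ ∈ Metric.ball z₀ R := Metric.mem_ball_self hR
  have hd : ∀ᵐ t ∂μ, ∀ z ∈ Metric.ball z₀ (R / 2),
      HasDerivAt (fun z => F z t) (deriv (fun z => F z t) z) z := by
    filter_upwards [hdiff] with t ht z hz
    exact (ht.differentiableAt (Metric.isOpen_ball.mem_nhds
      (Metric.ball_subset_ball (by linarith) hz))).hasDerivAt
  have hm' : AEStronglyMeasurable (fun t => deriv (fun z => F z t) z₀) μ := by
    -- the derivative is a limit of difference quotients along `z₀ + R / (n + 2)`
    have hpos : ∀ n : ℕ, 0 < R / ((n : ℝ) + 2) := fun n => by positivity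
    have hu : Filter.Tendsto (fun n : ℕ => z₀ + ((R / ((n : ℝ) + 2) : ℝ) : ℂ)) Filter.atTop
        (nhdsWithin z₀ {z₀}ᶜ) := by
      refine tendsto_nhdsWithin_iff.2 ⟨?_, Filter.Eventually.of_forall fun n => ?_⟩
      · have h1 : Filter.Tendsto (fun n : ℕ => R / ((n : ℝ) + 2)) Filter.atTop (nhds 0) :=
          (tendsto_natCast_atTop_atTop.atTop_add tendsto_const_nhds).const_div_atTop R
        have h2 := (Complex.continuous_ofReal.tendsto 0).comp h1
        simpa using h2.const_add z₀
      · have := (hpos n).ne'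
        simp only [Set.mem_compl_iff, Set.mem_singleton_iff, add_eq_left, Complex.ofReal_eq_zero]
        exact this
    refine aestronglyMeasurable_of_tendsto_ae Filter.atTop
      (f := fun (n : ℕ) t => slope (fun z => F z t) z₀ (z₀ + ((R / ((n : ℝ) + 2) : ℝ) : ℂ)))
      (fun n => ?_) ?_
    · simp only [slope, vsub_eq_sub]
      suffices hmem : z₀ + ((R / ((n : ℝ) + 2) : ℝ) : ℂ) ∈ Metric.ball z₀ R from
        ((hmeas _ hmem).sub (hmeas _ hz₀)).const_smul
          (z₀ + ((R / ((n : ℝ) + 2) : ℝ) : ℂ) - z₀)⁻¹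
      simp only [Metric.mem_ball, dist_self_add_left, Complex.norm_real, Real.norm_eq_abs,
        abs_of_pos (hpos n)]
      rw [div_lt_iff₀ (by positivity)]
      nlinarith [(Nat.cast_nonneg n : (0 : ℝ) ≤ n)]
    · filter_upwards [hd] with t ht
      exact (ht z₀ (Metric.mem_ball_self (by linarith))).tendsto_slope.comp hu
  refine (hasDerivAt_integral_of_dominated_loc_of_deriv_le
    (F' := fun z t => deriv (fun z => F z t) z) (bound := fun t => bound t / (R / 4))
    (Metric.ball_mem_nhds z₀ (half_pos hR)) ?_ ?_ hm' ?_ (hint.div_const _) hd).2.differentiableAt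
  · filter_upwards [Metric.ball_mem_nhds z₀ hR] with z hz using hmeas z hz
  · exact hint.mono' (hmeas _ hz₀) (hbound.mono fun t ht => ht _ hz₀)
  · filter_upwards [hdiff, hbound] with t ht hb z hz
    have hsub : Metric.closedBall z (R / 4) ⊆ Metric.ball z₀ R := fun y hy => by
      rw [Metric.mem_closedBall] at hy
      rw [Metric.mem_ball] at hz ⊢
      linarith [dist_triangle y z z₀]
    refine Complex.norm_deriv_le_of_forall_mem_sphere_norm_le (by linarith) ?_
      fun y hy => hb y (hsub (Metric.sphere_subset_closedBall hy))
    exact (ht.mono hsub).diffContOnCl_ball subset_rfl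

/-! ### The integrand on a ray and its bounds -/

/-- The integrand `z ^ (a - 1) (1 + z) ^ (-(a + β)) e ^ (x z)`, with principal branches of the
powers. -/
noncomputable def kerFun (β x : ℝ) (a z : ℂ) : ℂ :=
  z ^ (a - 1) * (1 + z) ^ (-(a + β)) * Complex.exp (x * z)

/-- The integral of `kerFun` along the ray from `0` to `∞` in direction `w`. -/
noncomputable def rayInt (β x : ℝ) (a w : ℂ) : ℂ :=
  ∫ r in Set.Ioi (0 : ℝ), w * kerFun β x a (w * r)

/-- Majorant on `(0, ∞)` of the integrand along a fixed ray with `0 < Im w`: it is `r ^ (σ - 1)`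
for `r ≤ 1` and `r ^ (-1 - β)` for `1 ≤ r`, where `σ` stands for the real part of `a`. -/
noncomputable def domFun (β σ r : ℝ) : ℝ := r ^ (σ - 1) * max 1 r ^ (-(σ + β))

lemma domFun_of_le {β σ r : ℝ} (h : r ≤ 1) : domFun β σ r = r ^ (σ - 1) := by
  simp [domFun, max_eq_left h]

lemma domFun_of_ge {β σ r : ℝ} (h : 1 ≤ r) : domFun β σ r = r ^ (-1 - β) := by
  rw [domFun, max_eq_right h, ← Real.rpow_add (by linarith)]
  congr 1; ring

lemma domFun_anti {β σ ρ r : ℝ} (h : ρ ≤ σ) (hr : 0 < r) : domFun β σ r ≤ domFun β ρ r := by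
  rcases le_total r 1 with h1 | h1
  · rw [domFun_of_le h1, domFun_of_le h1]
    exact Real.rpow_le_rpow_of_exponent_ge hr h1 (by linarith)
  · rw [domFun_of_ge h1, domFun_of_ge h1]

lemma integrableOn_domFun {β σ : ℝ} (hβ : 0 < β) (hσ : 0 < σ) :
    IntegrableOn (domFun β σ) (Set.Ioi 0) := by
  rw [← Set.Ioc_union_Ioi_eq_Ioi zero_le_one]
  refine IntegrableOn.union ?_ ?_
  · have := (intervalIntegrable_iff_integrableOn_Ioc_of_le zero_le_one).1
      (intervalIntegral.intervalIntegrable_rpow' (a := 0) (b := 1) (r := σ - 1) (by linarith))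
    exact this.congr_fun (fun r hr => (domFun_of_le hr.2).symm) measurableSet_Ioc
  · exact (integrableOn_Ioi_rpow_of_lt (by linarith : -1 - β < -1) zero_lt_one).congr_fun
      (fun r hr => (domFun_of_ge (le_of_lt hr)).symm) measurableSet_Ioi

lemma norm_cpow_le_exp (z a : ℂ) : ‖z ^ a‖ ≤ ‖z‖ ^ a.re * Real.exp (Real.pi * |a.im|) := by
  refine (Complex.norm_cpow_le z a).trans ?_
  rw [div_eq_mul_inv, ← Real.exp_neg]
  gcongr
  calc -(z.arg * a.im) ≤ |z.arg * a.im| := neg_le_abs _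
    _ = |z.arg| * |a.im| := abs_mul _ _
    _ ≤ _ := by gcongr; exact Complex.abs_arg_le_pi z

/-- Common source of all dominating functions below: any lower bound `δ * max 1 r` for
`‖1 + w * r‖`, where `δ` may depend on `r`, bounds the integrand by a multiple of `domFun`. The
exponential of `|Im a|` accounts for the arguments of `w * r` and `1 + w * r`. -/
lemma norm_mul_kerFun_le {β x δ r : ℝ} {a w : ℂ} (hx : 0 < x) (hβ : 0 < β) (ha : 0 < a.re)
    (hδ : 0 < δ) (hw : w ≠ 0) (hre : w.re ≤ 0) (hr : 0 < r) (h : δ * max 1 r ≤ ‖1 + w * r‖) :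
    ‖w * kerFun β x a (w * r)‖ ≤
      ‖w‖ ^ a.re * δ ^ (-(a.re + β)) * Real.exp (2 * Real.pi * |a.im|) * domFun β a.re r := by
  have h1 := norm_cpow_le_exp (w * r) (a - 1)
  have h2 := norm_cpow_le_exp (1 + w * r) (-(a + β))
  have h3 : ‖Complex.exp (x * (w * r))‖ ≤ 1 := by
    rw [Complex.norm_exp, Real.exp_le_one_iff]
    have : ((x : ℂ) * (w * r)).re = x * (w.re * r) := by simp
    rw [this]
    exact mul_nonpos_of_nonneg_of_nonpos hx.le (mul_nonpos_of_nonpos_of_nonneg hre hr.le)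
  have hw' : 0 < ‖w‖ := norm_pos_iff.2 hw
  have hm : 0 < max 1 r := lt_max_of_lt_left one_pos
  have e1 : ‖w * (r : ℂ)‖ = ‖w‖ * r := by simp [abs_of_pos hr]
  simp only [Complex.sub_re, Complex.one_re, Complex.sub_im, Complex.one_im, sub_zero, e1] at h1
  simp only [Complex.neg_re, Complex.add_re, Complex.ofReal_re, Complex.neg_im, Complex.add_im,
    Complex.ofReal_im, add_zero, abs_neg] at h2
  have h4 : ‖1 + w * r‖ ^ (-(a.re + β)) ≤ (δ * max 1 r) ^ (-(a.re + β)) :=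
    Real.rpow_le_rpow_of_nonpos (by positivity) h (by linarith)
  rw [Real.mul_rpow hδ.le hm.le] at h4
  rw [Real.mul_rpow hw'.le hr.le] at h1
  rw [kerFun, norm_mul, norm_mul, norm_mul]
  calc ‖w‖ * (‖(w * r) ^ (a - 1)‖ * ‖(1 + w * r) ^ (-(a + β))‖ * ‖Complex.exp (x * (w * r))‖)
      ≤ ‖w‖ * ((‖w‖ ^ (a.re - 1) * r ^ (a.re - 1) * Real.exp (Real.pi * |a.im|)) *
        ((δ ^ (-(a.re + β)) * max 1 r ^ (-(a.re + β))) * Real.exp (Real.pi * |a.im|)) * 1) := by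
        gcongr
        exact h2.trans (by gcongr)
    _ = _ := by
        have e2 : ‖w‖ ^ a.re = ‖w‖ * ‖w‖ ^ (a.re - 1) := by
          rw [Real.rpow_sub_one hw'.ne']; field_simp
        have e3 : Real.exp (2 * Real.pi * |a.im|) =
            Real.exp (Real.pi * |a.im|) * Real.exp (Real.pi * |a.im|) := by
          rw [← Real.exp_add]; ring_nf
        rw [e2, e3, domFun]; ring

lemma measurable_mul_kerFun (β x : ℝ) (a w : ℂ) :
    Measurable fun r : ℝ => w * kerFun β x a (w * r) := by
  unfold kerFun; fun_prop

lemma differentiableAt_kerFun {β x : ℝ} {a z : ℂ} (hz : 0 < z.im) :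
    DifferentiableAt ℂ (kerFun β x a) z := by
  have h1 : z ∈ Complex.slitPlane := Or.inr hz.ne'
  have h2 : 1 + z ∈ Complex.slitPlane := Or.inr (by simpa using hz.ne')
  unfold kerFun
  refine ((differentiableAt_id.cpow (differentiableAt_const _) h1).mul
    ((differentiableAt_id.const_add 1).cpow (differentiableAt_const _) h2)).mul ?_
  fun_prop

/-- A ray in the open upper half-plane stays away from the branch point `-1`. -/
lemma lower_bound {w : ℂ} {r : ℝ} (hw : 0 < w.im) :
    w.im / (‖w‖ + 1) * max 1 r ≤ ‖1 + w * r‖ := by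
  have hn := norm_nonneg w
  rw [div_mul_eq_mul_div, div_le_iff₀ (by positivity)]
  have h1 : w.im * r ≤ ‖1 + w * r‖ := by
    refine le_trans (le_of_eq ?_) (Complex.im_le_norm _); simp
  have h2 : w.im ≤ ‖1 + w * r‖ * ‖w‖ := by
    have : w.im = -((starRingEnd ℂ) w * (1 + w * r)).im := by simp; ring
    rw [this, ← Complex.norm_conj w, ← norm_mul, mul_comm (1 + _)]
    exact (neg_le_abs _).trans (Complex.abs_im_le_norm _)
  have h3 := norm_nonneg (1 + w * r)
  rcases max_cases 1 r with ⟨h, _⟩ | ⟨h, _⟩ <;> rw [h] <;> nlinarith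

/-! ### Independence of the direction of the ray -/

lemma differentiableAt_rayInt {β x α : ℝ} {w : ℂ} (hx : 0 < x) (hβ : 0 < β) (hα : 0 < α)
    (hre : w.re < 0) (him : 0 < w.im) : DifferentiableAt ℂ (rayInt β x α) w := by
  set R := min (-w.re) (w.im / 2) with hR
  have hR0 : 0 < R := lt_min (by linarith) (by linarith)
  have key : ∀ z ∈ Metric.ball w R, z.re < 0 ∧ w.im / 2 < z.im ∧ ‖z‖ ≤ ‖w‖ + R := by
    intro z hz
    rw [Metric.mem_ball, dist_eq_norm] at hz
    have h1 := (Complex.abs_re_le_norm (z - w)).trans_lt hz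
    have h2 := (Complex.abs_im_le_norm (z - w)).trans_lt hz
    rw [Complex.sub_re, abs_lt] at h1
    rw [Complex.sub_im, abs_lt] at h2
    have h3 := norm_le_norm_add_norm_sub' z w
    have := min_le_left (-w.re) (w.im / 2)
    have := min_le_right (-w.re) (w.im / 2)
    exact ⟨by linarith, by linarith, by linarith⟩
  set M := ‖w‖ + R with hM
  have hM0 : 0 < M := by positivity
  set δ := w.im / 2 / (M + 1) with hδ
  have hδ0 : 0 < δ := by positivity
  refine differentiableAt_integral_of_dominated (R := R)
    (bound := fun r => M ^ α * δ ^ (-(α + β)) * domFun β α r) hR0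
    (fun z _ => (measurable_mul_kerFun β x α z).aestronglyMeasurable) ?_ ?_
    ((integrableOn_domFun hβ hα).const_mul _)
  · refine (ae_restrict_mem measurableSet_Ioi).mono fun r hr z hz => ?_
    have hz' : 0 < (z * (r : ℂ)).im := by
      have := (key z hz).2.1
      simp only [Complex.mul_im, Complex.ofReal_re, Complex.ofReal_im, mul_zero, zero_add]
      exact mul_pos (by linarith) hr
    refine (differentiableAt_id.mul ?_).differentiableWithinAt
    exact DifferentiableAt.comp (f := fun z : ℂ => z * (r : ℂ)) z (differentiableAt_kerFun hz')
      (by fun_prop)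
  · refine (ae_restrict_mem measurableSet_Ioi).mono fun r hr z hz => ?_
    obtain ⟨k1, k2, k3⟩ := key z hz
    have hr' : (0 : ℝ) < r := hr
    have hm : 0 < max 1 r := lt_max_of_lt_left one_pos
    have hlow : δ * max 1 r ≤ ‖1 + z * r‖ := by
      refine le_trans ?_ (lower_bound (by linarith))
      rw [hδ]
      gcongr ?_ * _
      gcongr
      linarith
    have hz0 : z ≠ 0 := by rintro rfl; simp at k1
    have h := norm_mul_kerFun_le (a := (α : ℂ)) hx hβ (by simpa using hα) hδ0 hz0 k1.le hr hlow
    simp only [Complex.ofReal_re, Complex.ofReal_im, abs_zero, mul_zero, Real.exp_zero,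
      mul_one] at h
    refine h.trans ?_
    have : 0 ≤ domFun β α r := by unfold domFun; positivity
    gcongr

/-- Rescaling the ray does not change the integral. -/
lemma rayInt_smul (β x : ℝ) (a w : ℂ) {l : ℝ} (hl : 0 < l) :
    rayInt β x a (l * w) = rayInt β x a w := by
  have h := integral_comp_mul_left_Ioi (fun r : ℝ => w * kerFun β x a (w * r)) 0 hl
  rw [mul_zero] at h
  have e : ∀ r : ℝ, (l : ℂ) * w * kerFun β x a (l * w * r) =
      l • (w * kerFun β x a (w * ((l * r : ℝ) : ℂ))) := fun r => by
    rw [Complex.real_smul, Complex.ofReal_mul, mul_assoc (l : ℂ) w, mul_left_comm w,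
      mul_assoc (l : ℂ) w]
  unfold rayInt
  simp_rw [e]
  rw [MeasureTheory.integral_smul, h, smul_smul, mul_inv_cancel₀ hl.ne', one_smul]

/-- By `rayInt_smul` the holomorphic function `rayInt β x α` is constant along the ray through `w`,
so its derivative at `w`, multiplied by `w`, vanishes. -/
lemma deriv_rayInt {β x α : ℝ} {w : ℂ} (hx : 0 < x) (hβ : 0 < β) (hα : 0 < α)
    (hre : w.re < 0) (him : 0 < w.im) : deriv (rayInt β x α) w = 0 := by
  have hd := (differentiableAt_rayInt hx hβ hα hre him).hasDerivAt
  have hw : w ≠ 0 := by rintro rfl; simp at him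
  have h1 : HasDerivAt (fun l : ℂ => rayInt β x α (l * w)) (deriv (rayInt β x α) w * w) 1 := by
    have h2 : HasDerivAt (fun l : ℂ => l * w) w 1 := by
      simpa using (hasDerivAt_id (1 : ℂ)).mul_const w
    have hd' : HasDerivAt (rayInt β x α) (deriv (rayInt β x α) w) ((1 : ℂ) * w) := by
      rwa [one_mul]
    exact hd'.comp 1 h2
  have h3 := HasDerivAt.comp_ofReal (z := 1) (by simpa using h1)
  have h4 : HasDerivAt (fun l : ℝ => rayInt β x α (l * w)) 0 1 := by
    refine (hasDerivAt_const (1 : ℝ) (rayInt β x α w)).congr_of_eventuallyEq ?_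
    filter_upwards [lt_mem_nhds (zero_lt_one' ℝ)] with l hl using rayInt_smul β x α w hl
  have := h3.unique h4
  exact (mul_eq_zero.1 this).resolve_right hw

lemma rayInt_eq_of_quadrant {β x α : ℝ} {w z : ℂ} (hx : 0 < x) (hβ : 0 < β) (hα : 0 < α)
    (hw : w.re < 0 ∧ 0 < w.im) (hz : z.re < 0 ∧ 0 < z.im) :
    rayInt β x α w = rayInt β x α z := by
  have ho : IsOpen {w : ℂ | w.re < 0 ∧ 0 < w.im} :=
    (isOpen_lt Complex.continuous_re continuous_const).inter
      (isOpen_lt continuous_const Complex.continuous_im)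
  have hc : Convex ℝ {w : ℂ | w.re < 0 ∧ 0 < w.im} :=
    (convex_halfSpace_re_lt 0).inter (convex_halfSpace_im_gt 0)
  exact ho.is_const_of_deriv_eq_zero hc.isPreconnected
    (fun y hy => (differentiableAt_rayInt hx hβ hα hy.1 hy.2).differentiableWithinAt)
    (fun y hy => deriv_rayInt hx hβ hα hy.1 hy.2) hw hz

/-! ### Rotation onto the negative real axis -/

lemma continuousOn_log_upper : ContinuousOn Complex.log {z : ℂ | 0 ≤ z.im ∧ z ≠ 0} := by
  rintro z ⟨hz, h0⟩
  by_cases hs : z ∈ Complex.slitPlane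
  · exact (continuousAt_clog hs).continuousWithinAt
  · rw [Complex.mem_slitPlane_iff, not_or, not_lt, not_not] at hs
    have hre : z.re < 0 := lt_of_le_of_ne hs.1 fun h => h0 (Complex.ext h hs.2)
    exact (Complex.continuousWithinAt_log_of_re_neg_of_im_zero hre hs.2).mono fun y hy => hy.1

/-- On the closed upper half-plane the principal branches are continuous away from the branch
points: the boundary values on the negative axis are those taken from above. -/
lemma continuousOn_kerFun (β x : ℝ) (a : ℂ) :
    ContinuousOn (kerFun β x a) {z : ℂ | 0 ≤ z.im ∧ z ≠ 0 ∧ 1 + z ≠ 0} := by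
  have h1 : ContinuousOn (fun z : ℂ => Complex.log z) {z : ℂ | 0 ≤ z.im ∧ z ≠ 0 ∧ 1 + z ≠ 0} :=
    continuousOn_log_upper.mono fun z hz => ⟨hz.1, hz.2.1⟩
  have h2 : ContinuousOn (fun z : ℂ => Complex.log (1 + z))
      {z : ℂ | 0 ≤ z.im ∧ z ≠ 0 ∧ 1 + z ≠ 0} :=
    continuousOn_log_upper.comp (f := fun z : ℂ => 1 + z) (by fun_prop)
      fun z hz => ⟨by simpa using hz.1, hz.2.2⟩
  have h3 : ContinuousOn (fun z : ℂ => Complex.exp (Complex.log z * (a - 1)) *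
      Complex.exp (Complex.log (1 + z) * (-(a + β))) * Complex.exp (x * z))
      {z : ℂ | 0 ≤ z.im ∧ z ≠ 0 ∧ 1 + z ≠ 0} := by fun_prop
  refine h3.congr fun z hz => ?_
  rw [kerFun, Complex.cpow_def_of_ne_zero hz.2.1, Complex.cpow_def_of_ne_zero hz.2.2]

/-- Majorant of the integrand that is uniform in the direction `w` on the unit arc from `i` to
`-1`. It is singular at `r = 1`, and integrable there only because `α + β < 1`. -/
noncomputable def arcDom (β α r : ℝ) : ℝ := r ^ (α - 1) * |1 - r| ^ (-(α + β))

lemma arcDom_of_mem {β α r : ℝ} (hr : r ∈ Set.Ioc (0 : ℝ) 1) :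
    r ^ (α - 1) * (1 - r) ^ (1 - α - β - 1) = arcDom β α r := by
  rw [arcDom, abs_of_nonneg (by linarith [hr.2])]
  congr 2; ring

lemma intervalIntegrable_beta {u v : ℝ} (hu : 0 < u) (hv : 0 < v) :
    IntervalIntegrable (fun r : ℝ => r ^ (u - 1) * (1 - r) ^ (v - 1)) volume 0 1 := by
  have h := (Complex.betaIntegral_convergent (u := u) (v := v) (by simpa) (by simpa)).norm
  rw [intervalIntegrable_iff_integrableOn_Ioo_of_le zero_le_one] at h ⊢
  refine h.congr_fun (fun r hr => ?_) measurableSet_Ioo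
  have e : (1 : ℂ) - r = ((1 - r : ℝ) : ℂ) := by simp
  simp only [norm_mul]
  rw [e, Complex.norm_cpow_eq_rpow_re_of_pos hr.1,
    Complex.norm_cpow_eq_rpow_re_of_pos (sub_pos.2 hr.2)]
  simp

lemma integrableOn_arcDom {β α : ℝ} (hβ : 0 < β) (hα : 0 < α) (h : α + β < 1) :
    IntegrableOn (arcDom β α) (Set.Ioi 0) := by
  have hmeas : Measurable (arcDom β α) := by unfold arcDom; fun_prop
  rw [← Set.Ioc_union_Ioi_eq_Ioi zero_le_one, ← Set.Ioc_union_Ioi_eq_Ioi one_le_two]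
  refine IntegrableOn.union ?_ (IntegrableOn.union ?_ ?_)
  · have := (intervalIntegrable_iff_integrableOn_Ioc_of_le zero_le_one).1
      (intervalIntegrable_beta hα (by linarith : 0 < 1 - α - β))
    exact this.congr_fun (fun r hr => arcDom_of_mem hr) measurableSet_Ioc
  · have h1 := (intervalIntegral.intervalIntegrable_rpow' (a := 0) (b := 1) (r := -(α + β))
      (by linarith)).comp_sub_right 1
    rw [zero_add, one_add_one_eq_two,
      intervalIntegrable_iff_integrableOn_Ioc_of_le one_le_two] at h1
    refine h1.mono' hmeas.aestronglyMeasurable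
      ((ae_restrict_mem measurableSet_Ioc).mono fun r hr => ?_)
    have h0 : 0 < r - 1 := sub_pos.2 hr.1
    rw [arcDom, abs_sub_comm, abs_of_pos h0, Real.norm_of_nonneg (by
      have := zero_lt_one.trans hr.1
      positivity)]
    exact mul_le_of_le_one_left (by positivity)
      (Real.rpow_le_one_of_one_le_of_nonpos hr.1.le (by linarith))
  · have h1 := (integrableOn_Ioi_rpow_of_lt (by linarith : -1 - β < -1) zero_lt_two).const_mul
      ((1 / 2 : ℝ) ^ (-(α + β)))
    refine h1.mono' hmeas.aestronglyMeasurable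
      ((ae_restrict_mem measurableSet_Ioi).mono fun r hr => ?_)
    have hr2 : (2 : ℝ) < r := hr
    have h0 : 0 < r := by linarith
    rw [arcDom, abs_sub_comm, abs_of_pos (by linarith), Real.norm_of_nonneg (by
      have : 0 < r - 1 := by linarith
      positivity)]
    have e : r ^ (-1 - β) = r ^ (α - 1) * r ^ (-(α + β)) := by
      rw [← Real.rpow_add h0]; congr 1; ring
    rw [e, mul_left_comm, ← Real.mul_rpow (by norm_num) h0.le]
    gcongr ?_ * ?_
    exact Real.rpow_le_rpow_of_nonpos (by linarith) (by linarith) (by linarith)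

lemma norm_mul_kerFun_arc_le {β x α r : ℝ} {w : ℂ} (hx : 0 < x) (hβ : 0 < β) (hα : 0 < α)
    (hw : ‖w‖ = 1) (hre : w.re ≤ 0) (hr : 0 < r) (hr1 : r ≠ 1) :
    ‖w * kerFun β x α (w * r)‖ ≤ arcDom β α r := by
  have hn : ‖w * (r : ℂ)‖ = r := by simp [hw, abs_of_pos hr]
  have hlow : |1 - r| ≤ ‖1 + w * r‖ := by
    have := abs_norm_sub_norm_le (1 : ℂ) (-(w * r))
    rwa [norm_neg, hn, norm_one, sub_neg_eq_add] at this
  have h0 : 0 < |1 - r| := abs_pos.2 (sub_ne_zero.2 hr1.symm)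
  have hm : 0 < max 1 r := lt_max_of_lt_left one_pos
  have h := norm_mul_kerFun_le (β := β) (a := (α : ℂ)) (δ := |1 - r| / max 1 r) hx hβ
    (by simpa using hα) (by positivity) (norm_pos_iff.1 (by rw [hw]; exact one_pos)) hre hr
    (by rwa [div_mul_cancel₀ _ hm.ne'])
  refine h.trans (le_of_eq ?_)
  simp only [Complex.ofReal_re, Complex.ofReal_im, abs_zero, mul_zero, Real.exp_zero, mul_one, hw,
    Real.one_rpow, one_mul]
  rw [domFun, arcDom, mul_left_comm, ← Real.mul_rpow (by positivity) hm.le,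
    div_mul_cancel₀ _ hm.ne']

/-- The ray `[0, i∞)` can be rotated onto the upper edge of the negative real axis. The principal
branches take on that axis their boundary values from above, so `rayInt` in direction `-1` is the
integral along the upper edge. -/
lemma rayInt_I_eq {β x α : ℝ} (hx : 0 < x) (hβ : 0 < β) (hα : 0 < α) (h : α + β < 1) :
    rayInt β x α Complex.I = rayInt β x α (-1) := by
  have hpi := Real.pi_pos
  set γ : ℝ → ℂ := fun θ => Complex.exp (θ * Complex.I) with hγ
  have hγre : ∀ θ, (γ θ).re = Real.cos θ := fun θ => Complex.exp_ofReal_mul_I_re θ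
  have hγim : ∀ θ, (γ θ).im = Real.sin θ := fun θ => Complex.exp_ofReal_mul_I_im θ
  have hγn : ∀ θ, ‖γ θ‖ = 1 := fun θ => Complex.norm_exp_ofReal_mul_I θ
  have hγc : Continuous γ := by fun_prop
  have hne : ∀ᵐ r : ℝ ∂volume.restrict (Set.Ioi 0), r ≠ 1 :=
    ae_restrict_of_ae (by simp [ae_iff])
  have hcont : ContinuousOn (fun θ => rayInt β x α (γ θ)) (Set.Icc (Real.pi / 2) Real.pi) := by
    unfold rayInt
    refine continuousOn_of_dominated (bound := arcDom β α)
      (fun θ _ => (measurable_mul_kerFun β x α _).aestronglyMeasurable) (fun θ hθ => ?_)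
      (integrableOn_arcDom hβ hα h) ?_
    · filter_upwards [hne, ae_restrict_mem measurableSet_Ioi] with r hr1 hr
      refine norm_mul_kerFun_arc_le hx hβ hα (hγn θ) ?_ hr hr1
      rw [hγre]
      exact Real.cos_nonpos_of_pi_div_two_le_of_le hθ.1 (by linarith [hθ.2])
    · filter_upwards [hne, ae_restrict_mem measurableSet_Ioi] with r hr1 hr
      have hr0 : (0 : ℝ) < r := hr
      refine hγc.continuousOn.mul ((continuousOn_kerFun β x α).comp (by fun_prop) fun θ hθ => ?_)
      have hn : ‖γ θ * (r : ℂ)‖ = r := by simp [hγn, abs_of_pos hr0]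
      refine ⟨?_, ?_, ?_⟩
      · have : (γ θ * (r : ℂ)).im = Real.sin θ * r := by simp [hγim]
        rw [this]
        exact mul_nonneg (Real.sin_nonneg_of_nonneg_of_le_pi (by linarith [hθ.1]) hθ.2) hr0.le
      · rw [← norm_pos_iff, hn]; exact hr0
      · intro h0
        have : γ θ * (r : ℂ) = -1 := by linear_combination h0
        rw [this, norm_neg, norm_one] at hn
        exact hr1 hn.symm
  have hconst : Set.EqOn (fun θ => rayInt β x α (γ θ)) (fun _ => rayInt β x α (-1 + Complex.I))
      (Set.Ioo (Real.pi / 2) Real.pi) := fun θ hθ => by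
    refine rayInt_eq_of_quadrant hx hβ hα ⟨?_, ?_⟩ (by simp)
    · rw [hγre]
      exact Real.cos_neg_of_pi_div_two_lt_of_lt hθ.1 (by linarith [hθ.2])
    · rw [hγim]
      exact Real.sin_pos_of_pos_of_lt_pi (by linarith [hθ.1]) hθ.2
  have hext := hconst.of_subset_closure hcont continuousOn_const Set.Ioo_subset_Icc_self
    (closure_Ioo (by linarith : Real.pi / 2 ≠ Real.pi)).ge
  have e1 := hext (Set.left_mem_Icc.2 (by linarith))
  have e2 := hext (Set.right_mem_Icc.2 (by linarith))
  have g1 : γ (Real.pi / 2) = Complex.I := by simp [hγ, Complex.exp_pi_div_two_mul_I]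
  have g2 : γ Real.pi = -1 := Complex.exp_pi_mul_I
  simp only [g1, g2] at e1 e2
  rw [e1, e2]

/-! ### The case `α + β < 1` -/

/-- Between the branch points `0` and `-1` the integrand has the constant phase `π (α + β)`. -/
lemma arc_value_of_lt_one {β x α r : ℝ} (hr : 0 < r) (hr1 : r < 1) :
    Complex.exp (Real.pi * β * Complex.I) * (-1 * kerFun β x α (-1 * r)) =
      ((r ^ (α - 1) * (1 - r) ^ (-(α + β)) * Real.exp (-(x * r)) : ℝ) : ℂ) *
        Complex.exp (((Real.pi * (α + β) : ℝ) : ℂ) * Complex.I) := by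
  have e1 : (-1 : ℂ) * r = ((-r : ℝ) : ℂ) := by simp
  have e2 : (1 : ℂ) + ((-r : ℝ) : ℂ) = ((1 - r : ℝ) : ℂ) := by push_cast; ring
  have e3 : (-1 : ℂ) = Complex.exp (Real.pi * Complex.I) := Complex.exp_pi_mul_I.symm
  have e4 : -((-r : ℝ) : ℂ) = (r : ℂ) := by simp
  rw [kerFun, e1, e2, Complex.ofReal_cpow_of_nonpos (by linarith), e4]
  push_cast
  rw [Complex.ofReal_cpow hr.le, Complex.ofReal_cpow (by linarith : 0 ≤ 1 - r)]
  push_cast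
  have e5 : Complex.exp (Real.pi * β * Complex.I) *
      (Complex.exp (Real.pi * Complex.I) * Complex.exp (Real.pi * Complex.I * (α - 1))) =
      Complex.exp (Real.pi * (α + β) * Complex.I) := by
    rw [← Complex.exp_add, ← Complex.exp_add]; congr 1; ring
  rw [← e5, ← e3, show (x : ℂ) * -r = -(x * r) by ring]
  ring

/-- Beyond the branch point `-1` the phase `e ^ (iπβ)` makes the integrand real. -/
lemma arc_value_of_one_lt {β x α r : ℝ} (hr1 : 1 < r) :
    Complex.exp (Real.pi * β * Complex.I) * (-1 * kerFun β x α (-1 * r)) =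
      ((r ^ (α - 1) * (r - 1) ^ (-(α + β)) * Real.exp (-(x * r)) : ℝ) : ℂ) := by
  have e1 : (-1 : ℂ) * r = ((-r : ℝ) : ℂ) := by simp
  have e2 : (1 : ℂ) + ((-r : ℝ) : ℂ) = ((1 - r : ℝ) : ℂ) := by push_cast; ring
  have e3 : (-1 : ℂ) = Complex.exp (Real.pi * Complex.I) := Complex.exp_pi_mul_I.symm
  have e4 : -((-r : ℝ) : ℂ) = (r : ℂ) := by simp
  have e6 : -((1 - r : ℝ) : ℂ) = ((r - 1 : ℝ) : ℂ) := by push_cast; ring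
  rw [kerFun, e1, e2, Complex.ofReal_cpow_of_nonpos (by linarith : -r ≤ 0),
    Complex.ofReal_cpow_of_nonpos (by linarith : 1 - r ≤ 0), e4, e6]
  push_cast
  rw [Complex.ofReal_cpow (by linarith : 0 ≤ r), Complex.ofReal_cpow (by linarith : 0 ≤ r - 1)]
  push_cast
  have e5 : Complex.exp (Real.pi * β * Complex.I) * (Complex.exp (Real.pi * Complex.I) *
      Complex.exp (Real.pi * Complex.I * (α - 1)) *
      Complex.exp (Real.pi * Complex.I * (-(α + β)))) = 1 := by
    rw [← Complex.exp_add, ← Complex.exp_add, ← Complex.exp_add]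
    convert Complex.exp_zero using 2
    ring
  rw [← e3] at e5
  rw [show (x : ℂ) * -r = -(x * r) by ring]
  linear_combination ((r : ℂ) ^ ((α : ℂ) - 1) * ((r : ℂ) - 1) ^ (-((α : ℂ) + β)) *
    Complex.exp (-(x * r))) * e5

/-- Only the segment between the branch points contributes to the imaginary part. The exponent
`-(α + β)` of `1 - r` is written `1 - α - β - 1` to match the Beta integral. -/
lemma im_rayInt_eq {β x α : ℝ} (hx : 0 < x) (hβ : 0 < β) (hα : 0 < α) (h : α + β < 1) :
    (Complex.exp (Real.pi * β * Complex.I) * rayInt β x α Complex.I).im =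
      Real.sin (Real.pi * (α + β)) *
        ∫ r in (0 : ℝ)..1, r ^ (α - 1) * (1 - r) ^ (1 - α - β - 1) * Real.exp (-(x * r)) := by
  have hne : ∀ᵐ r : ℝ, r ≠ 1 := by simp [ae_iff]
  have hint : IntegrableOn (fun r : ℝ => Complex.exp (Real.pi * β * Complex.I) *
      (-1 * kerFun β x α (-1 * r))) (Set.Ioi 0) := by
    refine Integrable.const_mul ((integrableOn_arcDom hβ hα h).mono'
      (measurable_mul_kerFun β x α (-1)).aestronglyMeasurable ?_) _
    filter_upwards [ae_restrict_of_ae hne, ae_restrict_mem measurableSet_Ioi] with r hr1 hr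
    exact norm_mul_kerFun_arc_le hx hβ hα (by simp) (by simp) hr hr1
  rw [rayInt_I_eq hx hβ hα h, rayInt, ← MeasureTheory.integral_const_mul]
  have him := integral_im hint
  simp only [RCLike.im_to_complex] at him
  rw [← him, ← intervalIntegral.integral_const_mul, intervalIntegral.integral_of_le zero_le_one,
    ← Set.Ioc_union_Ioi_eq_Ioi zero_le_one]
  have hint' : IntegrableOn (fun r : ℝ => (Complex.exp (Real.pi * β * Complex.I) *
      (-1 * kerFun β x α (-1 * r))).im) (Set.Ioi 0) := hint.im
  rw [setIntegral_union (Set.Ioc_disjoint_Ioi le_rfl) measurableSet_Ioi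
    (hint'.mono_set Set.Ioc_subset_Ioi_self) (hint'.mono_set (Set.Ioi_subset_Ioi zero_le_one))]
  rw [setIntegral_eq_zero_of_forall_eq_zero (t := Set.Ioi 1), add_zero]
  · refine setIntegral_congr_ae measurableSet_Ioc (hne.mono fun r hr1 hr => ?_)
    rw [arc_value_of_lt_one hr.1 (lt_of_le_of_ne hr.2 hr1), Complex.im_ofReal_mul,
      Complex.exp_ofReal_mul_I_im, show 1 - α - β - 1 = -(α + β) by ring]
    ring
  · intro r hr
    rw [arc_value_of_one_lt hr, Complex.ofReal_im]

lemma integral_beta {u v : ℝ} (hu : 0 < u) (hv : 0 < v) :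
    ∫ r in (0 : ℝ)..1, r ^ (u - 1) * (1 - r) ^ (v - 1) =
      Real.Gamma u * Real.Gamma v / Real.Gamma (u + v) := by
  have h := Complex.betaIntegral_eq_Gamma_mul_div u v (by simpa) (by simpa)
  rw [Complex.betaIntegral] at h
  have e : ∫ r in (0 : ℝ)..1, (r : ℂ) ^ ((u : ℂ) - 1) * (1 - (r : ℂ)) ^ ((v : ℂ) - 1) =
      ∫ r in (0 : ℝ)..1, ((r ^ (u - 1) * (1 - r) ^ (v - 1) : ℝ) : ℂ) := by
    refine intervalIntegral.integral_congr fun r hr => ?_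
    rw [Set.uIcc_of_le zero_le_one] at hr
    rw [Complex.ofReal_mul, Complex.ofReal_cpow hr.1, Complex.ofReal_cpow (sub_nonneg.2 hr.2)]
    push_cast; rfl
  rw [e, intervalIntegral.integral_ofReal, ← Complex.ofReal_add, Complex.Gamma_ofReal,
    Complex.Gamma_ofReal, Complex.Gamma_ofReal] at h
  exact_mod_cast h

lemma Gamma_add_nat {s : ℝ} (hs : 0 < s) (n : ℕ) :
    Real.Gamma (s + n) = (ascPochhammer ℝ n).eval s * Real.Gamma s := by
  induction n with
  | zero => simp
  | succ n ih =>
    rw [ascPochhammer_succ_eval, Nat.cast_succ, ← add_assoc, Real.Gamma_add_one (by positivity), ih]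
    ring

/-- Euler's integral for Kummer's function, by termwise integration of the exponential series. -/
lemma integral_beta_exp {x u v : ℝ} (hx : 0 < x) (hu : 0 < u) (hv : 0 < v) :
    ∫ r in (0 : ℝ)..1, r ^ (u - 1) * (1 - r) ^ (v - 1) * Real.exp (-(x * r)) =
      Real.Gamma u * Real.Gamma v / Real.Gamma (u + v) * kummerPhi u (u + v) (-x) := by
  have hb := intervalIntegrable_beta hu hv
  have hs : HasSum (fun n : ℕ => ∫ r in (0 : ℝ)..1,
      r ^ (u - 1) * (1 - r) ^ (v - 1) * ((-(x * r)) ^ n / (n ! : ℝ)))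
      (∫ r in (0 : ℝ)..1, r ^ (u - 1) * (1 - r) ^ (v - 1) * Real.exp (-(x * r))) := by
    refine intervalIntegral.hasSum_integral_of_dominated_convergence
      (fun n r => r ^ (u - 1) * (1 - r) ^ (v - 1) * (x ^ n / (n ! : ℝ))) (fun n => ?_)
      (fun n => ?_) ?_ ?_ ?_
    · exact Measurable.aestronglyMeasurable (by fun_prop)
    · refine Filter.Eventually.of_forall fun r hr => ?_
      rw [Set.uIoc_of_le zero_le_one] at hr
      have h1 : 0 ≤ 1 - r := sub_nonneg.2 hr.2
      have h0 := hr.1.le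
      have h3 : |r ^ (u - 1) * (1 - r) ^ (v - 1)| = r ^ (u - 1) * (1 - r) ^ (v - 1) :=
        abs_of_nonneg (by positivity)
      rw [Real.norm_eq_abs, abs_mul, h3, abs_div, abs_pow, abs_neg,
        abs_of_nonneg (by positivity : 0 ≤ x * r), Nat.abs_cast]
      gcongr
      exact mul_le_of_le_one_right hx.le hr.2
    · exact Filter.Eventually.of_forall fun r _ => (Real.summable_pow_div_factorial x).mul_left _
    · simp_rw [tsum_mul_left]
      exact hb.mul_const _
    · refine Filter.Eventually.of_forall fun r _ => HasSum.mul_left _ ?_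
      rw [Real.exp_eq_exp_ℝ]
      exact NormedSpace.expSeries_div_hasSum_exp (-(x * r))
  rw [← hs.tsum_eq, kummerPhi, ← tsum_mul_left]
  congr 1; ext n
  have e : ∫ r in (0 : ℝ)..1, r ^ (u - 1) * (1 - r) ^ (v - 1) * ((-(x * r)) ^ n / (n ! : ℝ)) =
      ∫ r in (0 : ℝ)..1, ((-x) ^ n / (n ! : ℝ)) * (r ^ (u + n - 1) * (1 - r) ^ (v - 1)) := by
    refine intervalIntegral.integral_congr_ae (Filter.Eventually.of_forall fun r hr => ?_)
    rw [Set.uIoc_of_le zero_le_one] at hr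
    rw [show u + n - 1 = u - 1 + n by ring, Real.rpow_add_natCast hr.1.ne', ← neg_mul, mul_pow]
    ring
  have hp : 0 < (ascPochhammer ℝ n).eval (u + v) := ascPochhammer_pos n _ (by linarith)
  have hG : 0 < Real.Gamma (u + v) := Real.Gamma_pos_of_pos (by linarith)
  rw [e, intervalIntegral.integral_const_mul, integral_beta (by positivity) hv,
    show u + n + v = u + v + n by ring, Gamma_add_nat hu, Gamma_add_nat (by positivity)]
  field_simp

/-- The identity for `α + β < 1`; the sine factor is absorbed by the reflection formula for
`Γ(α + β)`. -/
lemma base_case {β x α : ℝ} (hx : 0 < x) (hβ : 0 < β) (hα : 0 < α) (h : α + β < 1) :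
    (Complex.exp (Real.pi * β * Complex.I) * rayInt β x α Complex.I).im =
      Real.pi * Real.Gamma α * kummerPhi α (1 - β) (-x)
          / (Real.Gamma (1 - β) * Real.Gamma (α + β)) := by
  rw [im_rayInt_eq hx hβ hα h, integral_beta_exp hx hα (by linarith : 0 < 1 - α - β)]
  have hr := Real.Gamma_mul_Gamma_one_sub (α + β)
  have hs : 0 < Real.sin (Real.pi * (α + β)) := Real.sin_pos_of_pos_of_lt_pi
    (by have := Real.pi_pos; positivity) (by nlinarith [Real.pi_pos])
  have hG : 0 < Real.Gamma (α + β) := Real.Gamma_pos_of_pos (by linarith)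
  rw [show 1 - (α + β) = 1 - α - β by ring, eq_div_iff hs.ne'] at hr
  rw [show α + (1 - α - β) = 1 - β by ring]
  generalize Real.sin (Real.pi * (α + β)) = s at hr hs ⊢
  rw [← hr]
  field_simp

/-! ### Analytic continuation in `α` -/

lemma differentiableAt_rayInt_param {β x : ℝ} {a : ℂ} (hx : 0 < x) (hβ : 0 < β) (ha : 0 < a.re) :
    DifferentiableAt ℂ (fun a => rayInt β x a Complex.I) a := by
  have key : ∀ b ∈ Metric.ball a (a.re / 2), a.re / 2 < b.re ∧ |b.im| ≤ |a.im| + a.re / 2 := by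
    intro b hb
    rw [Metric.mem_ball, dist_eq_norm] at hb
    have h1 := (Complex.abs_re_le_norm (b - a)).trans_lt hb
    have h2 := (Complex.abs_im_le_norm (b - a)).trans_lt hb
    rw [Complex.sub_re, abs_lt] at h1
    rw [Complex.sub_im] at h2
    have h3 := abs_sub_abs_le_abs_sub b.im a.im
    exact ⟨by linarith, by linarith⟩
  refine differentiableAt_integral_of_dominated (R := a.re / 2)
    (bound := fun r => Real.exp (2 * Real.pi * (|a.im| + a.re / 2)) * domFun β (a.re / 2) r)
    (by linarith)
    (fun b _ => (measurable_mul_kerFun β x b Complex.I).aestronglyMeasurable) ?_ ?_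
    ((integrableOn_domFun hβ (by linarith)).const_mul _)
  · refine (ae_restrict_mem measurableSet_Ioi).mono fun r hr b hb => ?_
    have hr0 : (0 : ℝ) < r := hr
    have h1 : Complex.I * (r : ℂ) ≠ 0 := by simp [hr0.ne']
    have h2 : 1 + Complex.I * (r : ℂ) ≠ 0 := fun h => by
      have := congrArg Complex.re h
      simp at this
    unfold kerFun
    refine DifferentiableAt.differentiableWithinAt ?_
    refine DifferentiableAt.const_mul (DifferentiableAt.mul_const (DifferentiableAt.mul ?_ ?_) _) _
    · exact DifferentiableAt.const_cpow (by fun_prop) (Or.inl h1)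
    · exact DifferentiableAt.const_cpow (by fun_prop) (Or.inl h2)
  · refine (ae_restrict_mem measurableSet_Ioi).mono fun r hr b hb => ?_
    obtain ⟨k1, k2⟩ := key b hb
    have hr0 : (0 : ℝ) < r := hr
    have hlow : 1 * max 1 r ≤ ‖1 + Complex.I * r‖ := by
      rw [one_mul]
      refine max_le ?_ ?_
      · refine le_trans (le_of_eq ?_) (Complex.re_le_norm _); simp
      · refine le_trans (le_of_eq ?_) (Complex.im_le_norm _); simp
    have h := norm_mul_kerFun_le (a := b) hx hβ (by linarith) one_pos Complex.I_ne_zero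
      (by simp) hr0 hlow
    rw [Complex.norm_I, Real.one_rpow, Real.one_rpow, one_mul, one_mul] at h
    have h0 : 0 ≤ domFun β b.re r := by unfold domFun; positivity
    refine h.trans (mul_le_mul ?_ (domFun_anti k1.le hr0) h0 (Real.exp_pos _).le)
    have := Real.pi_pos
    gcongr

/-- The series `φ(a, 1 - β, -x)` for complex `a`. -/
noncomputable def phiC (β x : ℝ) (a : ℂ) : ℂ :=
  ∑' n : ℕ, ((ascPochhammer ℂ n).eval a / (ascPochhammer ℂ n).eval ((1 - β : ℝ) : ℂ)) *
    ((-x : ℝ) : ℂ) ^ n / (n ! : ℂ)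

lemma ofReal_ascPochhammer (s : ℝ) (n : ℕ) :
    (((ascPochhammer ℝ n).eval s : ℝ) : ℂ) = (ascPochhammer ℂ n).eval (s : ℂ) := by
  induction n with
  | zero => simp
  | succ n ih => rw [ascPochhammer_succ_eval, ascPochhammer_succ_eval, ← ih]; push_cast; rfl

lemma phiC_ofReal (β x α : ℝ) : phiC β x α = (kummerPhi α (1 - β) (-x) : ℝ) := by
  rw [phiC, kummerPhi, Complex.ofReal_tsum]
  congr 1; ext n
  rw [← ofReal_ascPochhammer, ← ofReal_ascPochhammer]
  push_cast; rfl

/-- Locally uniform bound in `a` that makes the series `phiC` converge like an exponential series. -/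
lemma norm_ascPochhammer_le {β M : ℝ} {a : ℂ} (hβ0 : 0 < β) (hβ1 : β < 1) (ha : ‖a‖ ≤ M)
    (n : ℕ) :
    ‖(ascPochhammer ℂ n).eval a‖ ≤
      ((M + 1) / (1 - β)) ^ n * (ascPochhammer ℝ n).eval (1 - β) := by
  have hM : 0 ≤ M := (norm_nonneg a).trans ha
  have hb : 0 < 1 - β := by linarith
  induction n with
  | zero => simp
  | succ n ih =>
    have hp : 0 < (ascPochhammer ℝ n).eval (1 - β) := ascPochhammer_pos n _ hb
    have h1 : ‖a + n‖ ≤ (M + 1) / (1 - β) * (1 - β + n) := by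
      have h2 : ‖a + n‖ ≤ M + n := by
        refine (norm_add_le _ _).trans ?_
        rw [Complex.norm_natCast]
        linarith
      have h3 : (M + 1) / (1 - β) * (1 - β) = M + 1 := by field_simp
      have h4 : 1 ≤ (M + 1) / (1 - β) := by rw [one_le_div hb]; linarith
      have h5 : (0 : ℝ) ≤ n := n.cast_nonneg
      nlinarith
    rw [ascPochhammer_succ_eval, ascPochhammer_succ_eval, norm_mul]
    calc _ ≤ (((M + 1) / (1 - β)) ^ n * (ascPochhammer ℝ n).eval (1 - β)) *
          ((M + 1) / (1 - β) * (1 - β + n)) := by gcongr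
      _ = _ := by ring

lemma differentiable_phiC {β x : ℝ} (hx : 0 < x) (hβ0 : 0 < β) (hβ1 : β < 1) :
    Differentiable ℂ (phiC β x) := by
  intro a
  have hb : 0 < 1 - β := by linarith
  have hd : DifferentiableOn ℂ (phiC β x) (Metric.ball 0 (‖a‖ + 1)) := by
    refine Complex.differentiableOn_tsum_of_summable_norm
      (Real.summable_pow_div_factorial ((‖a‖ + 1 + 1) / (1 - β) * x)) (fun n => ?_)
      Metric.isOpen_ball (fun n b hb' => ?_)
    · have : Differentiable ℂ fun b => (ascPochhammer ℂ n).eval b := Polynomial.differentiable _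
      fun_prop
    · rw [mem_ball_zero_iff] at hb'
      have hp : 0 < (ascPochhammer ℝ n).eval (1 - β) := ascPochhammer_pos n _ hb
      rw [← ofReal_ascPochhammer, norm_div, norm_mul, norm_div, norm_pow, Complex.norm_real,
        Complex.norm_real, norm_neg, Real.norm_of_nonneg hx.le, Real.norm_of_nonneg hp.le,
        Complex.norm_natCast, mul_pow]
      gcongr
      rw [div_le_iff₀ hp]
      exact norm_ascPochhammer_le hβ0 hβ1 hb'.le n
  exact hd.differentiableAt (Metric.isOpen_ball.mem_nhds (by simp))

/-- The identity for all `α > 0`: both sides extend holomorphically to `0 < Re a` and agree on the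
real interval `(0, 1 - β)` by `base_case`. -/
lemma im_rayInt_eq_kummer {β x α : ℝ} (hx : 0 < x) (hβ0 : 0 < β) (hβ1 : β < 1) (hα : 0 < α) :
    (Complex.exp (Real.pi * β * Complex.I) * rayInt β x α Complex.I).im =
      Real.pi * Real.Gamma α * kummerPhi α (1 - β) (-x)
          / (Real.Gamma (1 - β) * Real.Gamma (α + β)) := by
  set U : Set ℂ := {a | 0 < a.re} with hU
  have hUo : IsOpen U := isOpen_lt continuous_const Complex.continuous_re
  have hUc : IsPreconnected U := (convex_halfSpace_re_gt 0).isPreconnected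
  set P : ℂ → ℂ := fun a => Complex.exp (Real.pi * β * Complex.I) * rayInt β x a Complex.I with hP
  -- the holomorphic function agreeing with `Im P` on the real axis
  set L : ℂ → ℂ := fun a => (P a - (starRingEnd ℂ) (P ((starRingEnd ℂ) a))) / (2 * Complex.I)
    with hL
  set Q : ℂ → ℂ := fun a => Real.pi * Complex.Gamma a * phiC β x a *
    (((Real.Gamma (1 - β) : ℝ) : ℂ)⁻¹ * (Complex.Gamma (a + β))⁻¹) with hQ
  have hLre : ∀ s : ℝ, L s = ((P s).im : ℂ) := fun s => by
    rw [Complex.im_eq_sub_conj, hL]; simp only [Complex.conj_ofReal]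
  have hQre : ∀ s : ℝ, Q s = ((Real.pi * Real.Gamma s * kummerPhi s (1 - β) (-x)
          / (Real.Gamma (1 - β) * Real.Gamma (s + β)) : ℝ) : ℂ) := fun s => by
    simp only [hQ]
    rw [phiC_ofReal, ← Complex.ofReal_add, Complex.Gamma_ofReal, Complex.Gamma_ofReal]
    push_cast
    rw [div_eq_mul_inv, mul_inv]
  have hPd : ∀ a ∈ U, DifferentiableAt ℂ P a := fun a ha =>
    (differentiableAt_rayInt_param hx hβ0 ha).const_mul _
  have hLa : AnalyticOnNhd ℂ L U := by
    refine DifferentiableOn.analyticOnNhd (fun a ha => ?_) hUo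
    have hc : (starRingEnd ℂ) a ∈ U := by simpa [hU] using ha
    have h2 := (hPd _ hc).conj_conj
    rw [Complex.conj_conj] at h2
    exact (((hPd a ha).sub h2).div_const _).differentiableWithinAt
  have hQa : AnalyticOnNhd ℂ Q U := by
    refine DifferentiableOn.analyticOnNhd (fun a ha => ?_) hUo
    have hG : DifferentiableAt ℂ Complex.Gamma a := Complex.differentiableAt_Gamma a fun m hm => by
      have ha' : 0 < a.re := ha
      rw [hm] at ha'
      simp only [Complex.neg_re, Complex.natCast_re] at ha'
      linarith [(Nat.cast_nonneg m : (0 : ℝ) ≤ m)]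
    have hG' : DifferentiableAt ℂ (fun a : ℂ => (Complex.Gamma (a + β))⁻¹) a :=
      (Complex.differentiable_one_div_Gamma.comp (differentiable_id.add_const (β : ℂ))) a
    exact (((hG.const_mul _).mul (differentiable_phiC hx hβ0 hβ1 a)).mul
      (hG'.const_mul _)).differentiableWithinAt
  have hfreq : ∃ᶠ a in nhdsWithin (((1 - β) / 2 : ℝ) : ℂ) {(((1 - β) / 2 : ℝ) : ℂ)}ᶜ,
      L a = Q a := by
    have ht : Filter.Tendsto (fun s : ℝ => (s : ℂ))
        (nhdsWithin ((1 - β) / 2) {(1 - β) / 2}ᶜ)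
        (nhdsWithin (((1 - β) / 2 : ℝ) : ℂ) {(((1 - β) / 2 : ℝ) : ℂ)}ᶜ) :=
      tendsto_nhdsWithin_iff.2
        ⟨Complex.continuous_ofReal.continuousAt.tendsto.mono_left nhdsWithin_le_nhds, by
          filter_upwards [self_mem_nhdsWithin] with s hs
          exact fun h => hs (Complex.ofReal_injective h)⟩
    refine ht.frequently (Filter.Eventually.frequently ?_)
    have : Set.Ioo 0 (1 - β) ∈ nhds ((1 - β) / 2) := Ioo_mem_nhds (by linarith) (by linarith)
    filter_upwards [nhdsWithin_le_nhds this] with s hs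
    rw [hLre, hQre, hP]
    exact congrArg _ (base_case hx hβ0 hs.1 (by linarith [hs.2]))
  have h0 : (((1 - β) / 2 : ℝ) : ℂ) ∈ U := by
    show 0 < ((((1 - β) / 2 : ℝ) : ℂ)).re
    rw [Complex.ofReal_re]; linarith
  have := hLa.eqOn_of_preconnected_of_frequently_eq hQa hUc h0 hfreq
    (show (α : ℂ) ∈ U by simpa [hU] using hα)
  rw [hLre, hQre] at this
  exact Complex.ofReal_injective this

/-! ### The substitution `t = tan v` -/

/-- Both powers are split into modulus and argument: `i t` has argument `π / 2`, and `1 + i t` has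
argument `arctan t` and modulus `1 / cos (arctan t)`. The factor `1 / (1 + t ^ 2)` is the derivative
of `arctan`. -/
lemma tan_subst_value {β x α t : ℝ} (ht : 0 < t) :
    (Complex.exp (Real.pi * β * Complex.I) * (Complex.I * kerFun β x α (Complex.I * t))).im =
      (1 / (1 + t ^ 2)) * (Real.sin (Real.arctan t) ^ (α - 1) *
        Real.cos (Real.arctan t) ^ (β - 1) * Real.sin (x * Real.tan (Real.arctan t) -
          (α + β) * Real.arctan t + (α / 2 + β) * Real.pi)) := by
  have hc := Real.cos_arctan_pos t
  have ht' : Real.tan (Real.arctan t) = t := Real.tan_arctan t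
  have hs : Real.sin (Real.arctan t) = t * Real.cos (Real.arctan t) := by
    rw [← Real.tan_mul_cos hc.ne', ht']
  have hsq : 1 / (1 + t ^ 2) = Real.cos (Real.arctan t) ^ 2 := (Real.cos_sq_arctan t).symm
  rw [ht', hs, hsq]
  set v := Real.arctan t with hv
  set c := Real.cos v with hcdef
  have e1 : (1 : ℂ) + Complex.I * t = ((c⁻¹ : ℝ) : ℂ) * Complex.exp ((v : ℂ) * Complex.I) := by
    rw [Complex.exp_mul_I, ← Complex.ofReal_cos, ← Complex.ofReal_sin, hs, ← hcdef]
    have : (c : ℂ) ≠ 0 := by exact_mod_cast hc.ne'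
    push_cast; field_simp
  have hlog1 : Complex.log (1 + Complex.I * t) = ((Real.log c⁻¹ : ℝ) : ℂ) + v * Complex.I := by
    rw [e1, Complex.log_ofReal_mul (inv_pos.2 hc) (Complex.exp_ne_zero _), Complex.log_exp]
    · have := Real.neg_pi_div_two_lt_arctan t
      simp only [Complex.mul_im, Complex.ofReal_re, Complex.I_im, Complex.ofReal_im, Complex.I_re]
      linarith [Real.pi_pos]
    · have := Real.arctan_lt_pi_div_two t
      simp only [Complex.mul_im, Complex.ofReal_re, Complex.I_im, Complex.ofReal_im, Complex.I_re]
      linarith [Real.pi_pos]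
  have hlog2 : Complex.log (Complex.I * t) =
      ((Real.log t : ℝ) : ℂ) + Real.pi / 2 * Complex.I := by
    rw [mul_comm, Complex.log_ofReal_mul ht Complex.I_ne_zero, Complex.log_I]
  have hn1 : (1 : ℂ) + Complex.I * t ≠ 0 := fun h => by
    have := congrArg Complex.re h
    simp at this
  have hn2 : Complex.I * (t : ℂ) ≠ 0 := by simp [ht.ne']
  have key : Complex.exp (Real.pi * β * Complex.I) * (Complex.I * kerFun β x α (Complex.I * t)) =
      ((Real.exp (Real.log t * (α - 1) + Real.log c * (α + β)) : ℝ) : ℂ) *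
        Complex.exp (((x * t - (α + β) * v + (α / 2 + β) * Real.pi : ℝ) : ℂ) * Complex.I) := by
    rw [kerFun, Complex.cpow_def_of_ne_zero hn1, Complex.cpow_def_of_ne_zero hn2, hlog1, hlog2,
      Real.log_inv]
    conv_lhs => rw [← Complex.exp_pi_div_two_mul_I]
    rw [Complex.ofReal_exp]
    simp only [← Complex.exp_add]
    rw [Complex.exp_pi_div_two_mul_I]
    congr 1
    push_cast
    ring
  rw [key, Complex.im_ofReal_mul, Complex.exp_ofReal_mul_I_im, ← mul_assoc]
  congr 1
  rw [Real.mul_rpow ht.le hc.le, Real.exp_add, Real.exp_mul, Real.exp_log ht, Real.exp_mul,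
    Real.exp_log hc, ← Real.rpow_natCast c 2]
  have : c ^ (α + β) = c ^ ((2 : ℕ) : ℝ) * (c ^ (α - 1) * c ^ (β - 1)) := by
    rw [← Real.rpow_add hc, ← Real.rpow_add hc]; congr 1; push_cast; ring
  rw [this]; ring

lemma arctan_image_Ioi : Real.arctan '' Set.Ioi 0 = Set.Ioo 0 (Real.pi / 2) := by
  ext v
  constructor
  · rintro ⟨t, ht, rfl⟩
    exact ⟨Real.arctan_pos.2 ht, Real.arctan_lt_pi_div_two t⟩
  · rintro ⟨h0, h1⟩
    exact ⟨Real.tan v, Real.tan_pos_of_pos_of_lt_pi_div_two h0 h1,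
      Real.arctan_tan (by linarith) h1⟩

/-- ∫₀^{π/2} sin^{α−1}v·cos^{β−1}v·sin(x·tan v − (α+β)v + (α/2+β)π) dv
      = π·Γ(α)·φ(α,1−β,−x)/(Γ(1−β)·Γ(α+β)). -/
theorem kummer_sine_integral_phi (α β x : ℝ) (hx : 0 < x) (hα : 0 < α)
    (hβ0 : 0 < β) (hβ1 : β < 1) :
    ∫ v in (0 : ℝ)..(Real.pi / 2),
        Real.sin v ^ (α - 1) * Real.cos v ^ (β - 1)
          * Real.sin (x * Real.tan v - (α + β) * v + (α / 2 + β) * Real.pi)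
      = Real.pi * Real.Gamma α * kummerPhi α (1 - β) (-x)
          / (Real.Gamma (1 - β) * Real.Gamma (α + β)) := by
  rw [← im_rayInt_eq_kummer hx hβ0 hβ1 hα, intervalIntegral.integral_of_le (by positivity),
    integral_Ioc_eq_integral_Ioo, ← arctan_image_Ioi,
    integral_image_eq_integral_abs_deriv_smul measurableSet_Ioi
      (fun t _ => (Real.hasDerivAt_arctan t).hasDerivWithinAt) Real.arctan_injective.injOn]
  have hint : IntegrableOn (fun r : ℝ => Complex.exp (Real.pi * β * Complex.I) *
      (Complex.I * kerFun β x α (Complex.I * r))) (Set.Ioi 0) := by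
    refine Integrable.const_mul ((integrableOn_domFun hβ0 hα).mono'
      (measurable_mul_kerFun β x α Complex.I).aestronglyMeasurable ?_) _
    filter_upwards [ae_restrict_mem measurableSet_Ioi] with r hr
    have hlow : 1 * max 1 r ≤ ‖1 + Complex.I * r‖ := by
      rw [one_mul]
      refine max_le ?_ ?_
      · refine le_trans (le_of_eq ?_) (Complex.re_le_norm _); simp
      · refine le_trans (le_of_eq ?_) (Complex.im_le_norm _); simp
    simpa using norm_mul_kerFun_le (a := (α : ℂ)) hx hβ0 (by simpa using hα) one_pos
      Complex.I_ne_zero (by simp) hr hlow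
  have him := integral_im hint
  simp only [RCLike.im_to_complex] at him
  rw [rayInt, ← MeasureTheory.integral_const_mul, ← him]
  refine setIntegral_congr_fun measurableSet_Ioi fun t ht => ?_
  rw [tan_subst_value ht, smul_eq_mul, abs_of_pos (by positivity)]
end
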